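/- arXiv:1801.05121 — 2 statements merged into one kernel-verified Lean document; each statement's English description precedes it below -/
import Mathlib

section
/- Fix κ > β. The piecewise-defined function f solves the fluid PDE for h(x) = max(x_2 − κ/√n, 0); that is, (−x_1 + x_2 − β/√n)·f_1(x) − x_2·f_2(x) = −max(x_2 − κ/√n, 0) for all x ∈ Ω, and f_1(0, x_2) = f_2(0, x_2) for all x_2 ≥ 0. -/
/-- `(ν, η)` solves the nonlinear system of Lemma `gamma` for initial value `x₁`. -/
def GammaSol (n : ℕ) (β κ x1 ν η : ℝ) : Prop :=
  κ / Real.sqrt n ≤ ν ∧ 0 ≤ η ∧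
    -(β / Real.sqrt n) + (x1 + β / Real.sqrt n) * Real.exp (-η) +
        η * ν * Real.exp (-η) = 0 ∧
    ν * Real.exp (-η) = κ / Real.sqrt n

/-- `η` solves the hitting-time equation `β/√n - (x₁ + β/√n)e^{-η} - η x₂ e^{-η} = 0`. -/
def HitEq (n : ℕ) (β x1 x2 η : ℝ) : Prop :=
  β / Real.sqrt n - (x1 + β / Real.sqrt n) * Real.exp (-η) -
      η * x2 * Real.exp (-η) = 0

/-- The piecewise candidate solution of Lemma `derivs`:
`f(x) = 0` for `x₂ ∈ [0, κ/√n]`;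
`f(x) = x₂ - κ/√n - (κ/√n)log(√n x₂/κ)` for `x ≤ Γ^{(κ)}`, `x₂ ≥ κ/√n`;
`f(x) = x₂(1 - e^{-τ(x)}) - (κ/√n)τ(x) + (1/2)(√n/β)(x₂ e^{-τ(x)} - κ/√n)²` for
`x ≥ Γ^{(κ)}`.  (On the overlaps of the regions the pieces agree, so the `if-then-else`
priority below is immaterial.) -/
noncomputable def fCand (n : ℕ) (β κ : ℝ) (νs : ℝ → ℝ) (tau : ℝ → ℝ → ℝ)
    (x1 x2 : ℝ) : ℝ :=
  if νs x1 ≤ x2 then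
    x2 * (1 - Real.exp (-tau x1 x2)) - κ / Real.sqrt n * tau x1 x2 +
      1 / 2 * (Real.sqrt n / β) * (x2 * Real.exp (-tau x1 x2) - κ / Real.sqrt n) ^ 2
  else if κ / Real.sqrt n ≤ x2 then
    x2 - κ / Real.sqrt n - κ / Real.sqrt n * Real.log (Real.sqrt n * x2 / κ)
  else 0

/-!
Write `b = β / √n` and `k = κ / √n`. The fluid path started at height `y` hits the axis `x₁ = 0` at
time `s` exactly when it starts from `x₁ = b * (exp s - 1) - y * s`, and it crosses height `k` at
time `log (y / k)`. So `Γ` is the graph of an explicit decreasing function of `y`, and the region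
above `Γ` is parametrised by `s ∈ [0, log (y / k)]`, on which `f` is an explicit function of
`(y, s)`. Since the partial derivatives of `f` are given, the chain rule along curves of constant
`y` and of constant `x₁` computes them in these coordinates without differentiating `τ`.
-/

section

open Real Set Filter Topology

variable {b k x y s : ℝ}

/-- The abscissa from which the fluid path started at height `y` hits the axis `x₁ = 0` at
time `s`; `HitEq` solved for `x₁`. -/
noncomputable def hitStart (b y s : ℝ) : ℝ :=
  b * (exp s - 1) - y * s

/-- The height from which the fluid path started at abscissa `x` hits the axis `x₁ = 0` at
time `s`; `HitEq` solved for `x₂`, meaningful for `s ≠ 0` only. -/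
noncomputable def hitHeight (b x s : ℝ) : ℝ :=
  (b * (exp s - 1) - x) / s

/-- The curve `Γ` as a graph over the heights `y ≥ k`: the abscissa from which the fluid path
started at height `y` hits the axis `x₁ = 0` at the time `log (y / k)` at which it crosses
height `k`. -/
noncomputable def gammaStart (b k y : ℝ) : ℝ :=
  hitStart b y (log (y / k))

/-- The cost of the fluid path started at height `y` and hitting the axis `x₁ = 0` at time `s`: the
integral of `y * exp (-t) - k` over `[0, s]` plus the cost incurred from the hitting point on. -/
noncomputable def fluidCost (b k y s : ℝ) : ℝ :=
  y * (1 - exp (-s)) - k * s + (y * exp (-s) - k) ^ 2 / (2 * b)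

/-- The value of `∂f/∂x₁` at the point of height `y` and hitting time `s` above `Γ`. -/
noncomputable def costSlope (b k y s : ℝ) : ℝ :=
  (y * exp (-s) - k) * exp (-s) / b

/-- `F` is given by the piecewise formulas for `f`, with the region above `Γ` described by height
and hitting time and the region below `Γ` by `x ≤ gammaStart b k y`, so that neither `ν*` nor `τ`
appears. -/
structure IsPiecewiseCost (b k : ℝ) (F : ℝ → ℝ → ℝ) : Prop where
  above_curve : ∀ {y s}, k ≤ y → s ∈ Icc 0 (log (y / k)) →
    F (hitStart b y s) y = fluidCost b k y s
  below_curve : ∀ {x y}, x ≤ 0 → k ≤ y → x ≤ gammaStart b k y →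
    F x y = y - k - k * log (y / k)
  eq_zero : ∀ {x y}, x ≤ 0 → y ≤ k → F x y = 0

@[simp]
lemma hitStart_zero_right : hitStart b y 0 = 0 := by
  simp [hitStart]

lemma hitStart_hitHeight (hs : s ≠ 0) : hitStart b (hitHeight b x s) s = x := by
  rw [hitStart, hitHeight, div_mul_cancel₀ _ hs]
  ring

lemma hitHeight_hitStart (hs : s ≠ 0) : hitHeight b (hitStart b y s) s = y := by
  rw [hitStart, hitHeight, sub_sub_cancel, mul_div_cancel_right₀ _ hs]

lemma hasDerivAt_hitStart : HasDerivAt (hitStart b y) (b * exp s - y) s := by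
  have h := (((hasDerivAt_exp s).sub_const 1).const_mul b).fun_sub ((hasDerivAt_id s).const_mul y)
  exact h.congr_deriv (by rw [mul_one])

lemma hasDerivAt_hitHeight (hs : s ≠ 0) :
    HasDerivAt (hitHeight b x) ((b * exp s - hitHeight b x s) / s) s := by
  have h := ((((hasDerivAt_exp s).sub_const 1).const_mul b).sub_const x).fun_div
    (hasDerivAt_id s) hs
  refine h.congr_deriv ?_
  simp only [hitHeight, id]
  field_simp

lemma strictAntiOn_hitStart (hb : 0 < b) (hy : 0 < y) :
    StrictAntiOn (hitStart b y) (Iic (log (y / b))) := by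
  refine strictAntiOn_of_hasDerivWithinAt_neg (convex_Iic _)
    (fun s _ => hasDerivAt_hitStart.continuousAt.continuousWithinAt)
    (fun s _ => hasDerivAt_hitStart.hasDerivWithinAt) fun s hs => ?_
  rw [interior_Iic, mem_Iio, lt_log_iff_exp_lt (div_pos hy hb), lt_div_iff₀' hb] at hs
  exact sub_neg.2 hs

lemma isLeast_hitStart_fiber (hb : 0 < b) (hy : 0 < y) (hs : s ∈ Icc 0 (log (y / b))) :
    IsLeast {t | 0 ≤ t ∧ hitStart b y t = hitStart b y s} s := by
  refine ⟨⟨hs.1, rfl⟩, fun t ⟨_, ht⟩ => le_of_not_gt fun hts => ?_⟩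
  exact (strictAntiOn_hitStart hb hy (hts.le.trans hs.2) hs.2 hts).ne' ht

lemma log_div_le_log_div_of_le (hb : 0 < b) (hbk : b ≤ k) (hy : 0 < y) :
    log (y / k) ≤ log (y / b) :=
  log_le_log (div_pos hy (hb.trans_le hbk)) (div_le_div_of_nonneg_left hy.le hb hbk)

lemma mul_exp_lt_of_lt_log (hk : 0 < k) (hbk : b ≤ k) (hy : 0 < y) (hs : s < log (y / k)) :
    b * exp s < y := by
  rw [lt_log_iff_exp_lt (div_pos hy hk), lt_div_iff₀' hk] at hs
  exact (mul_le_mul_of_nonneg_right hbk (exp_pos s).le).trans_lt hs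

lemma antitoneOn_hitStart (hb : 0 < b) (hbk : b ≤ k) (hy : 0 < y) :
    AntitoneOn (hitStart b y) (Iic (log (y / k))) :=
  (strictAntiOn_hitStart hb hy).antitoneOn.mono
    (Iic_subset_Iic.2 (log_div_le_log_div_of_le hb hbk hy))

lemma gammaStart_eq (hk : 0 < k) (hy : 0 < y) :
    gammaStart b k y = b * (y / k - 1) - y * log (y / k) := by
  rw [gammaStart, hitStart, exp_log (div_pos hy hk)]

lemma gammaStart_self : gammaStart b k k = 0 := by
  simp [gammaStart]

lemma hasDerivAt_gammaStart (hk : 0 < k) (hy : 0 < y) :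
    HasDerivAt (gammaStart b k) ((b - k) / k - log (y / k)) y := by
  have hdiv : HasDerivAt (fun t => t / k) (1 / k) y := (hasDerivAt_id y).div_const k
  have h := ((hdiv.sub_const 1).const_mul b).fun_sub
    ((hasDerivAt_id y).fun_mul (hdiv.log (div_pos hy hk).ne'))
  refine (h.congr_of_eventuallyEq ?_).congr_deriv ?_
  · filter_upwards [Ioi_mem_nhds hy] with t ht using gammaStart_eq hk ht
  · simp only [id]
    field_simp
    ring

lemma strictAntiOn_gammaStart (hk : 0 < k) (hbk : b ≤ k) :
    StrictAntiOn (gammaStart b k) (Ici k) := by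
  have hderiv (y) (hy : k ≤ y) := hasDerivAt_gammaStart (b := b) hk (hk.trans_le hy)
  refine strictAntiOn_of_hasDerivWithinAt_neg (convex_Ici k)
    (fun y hy => (hderiv y hy).continuousAt.continuousWithinAt)
    (fun y hy => (hderiv y (interior_subset hy)).hasDerivWithinAt) fun y hy => ?_
  rw [interior_Ici, mem_Ioi] at hy
  have hlog : 0 < log (y / k) := log_pos ((one_lt_div hk).2 hy)
  have hbk' : (b - k) / k ≤ 0 := div_nonpos_of_nonpos_of_nonneg (sub_nonpos.2 hbk) hk.le
  linarith

lemma exists_hitStart_eq (hk : 0 < k) (hy : k ≤ y) (hx : x ≤ 0) (hγ : gammaStart b k y < x) :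
    ∃ s ∈ Ico 0 (log (y / k)), hitStart b y s = x := by
  have hcont : ContinuousOn (hitStart b y) (Icc 0 (log (y / k))) :=
    fun s _ => hasDerivAt_hitStart.continuousAt.continuousWithinAt
  have hlog : 0 ≤ log (y / k) := log_nonneg ((one_le_div hk).2 hy)
  exact intermediate_value_Ico' hlog hcont ⟨hγ, by simpa using hx⟩

lemma hasDerivAt_fluidCost_comp {Y T : ℝ → ℝ} {Y' T' t : ℝ} (hb : b ≠ 0)
    (hY : HasDerivAt Y Y' t) (hT : HasDerivAt T T' t) :
    HasDerivAt (fun u => fluidCost b k (Y u) (T u))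
      (Y' * (1 - exp (-T t) + costSlope b k (Y t) (T t)) +
        T' * ((b * exp (T t) - Y t) * costSlope b k (Y t) (T t))) t := by
  have hE := hT.fun_neg.exp
  have h := ((hY.fun_mul (hE.const_sub 1)).fun_sub (hT.const_mul k)).fun_add
    ((((hY.fun_mul hE).sub_const k).fun_pow 2).div_const (2 * b))
  refine h.congr_deriv ?_
  rw [costSlope, exp_neg]
  have := exp_ne_zero (T t)
  push_cast
  field_simp
  ring

lemma fluidCost_log (hk : 0 < k) (hy : 0 < y) :
    fluidCost b k y (log (y / k)) = y - k - k * log (y / k) := by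
  have hcross : y * exp (-log (y / k)) = k := by
    rw [← log_inv, exp_log (inv_pos.2 (div_pos hy hk)), inv_div, mul_div_cancel₀ _ hy.ne']
  rw [fluidCost, mul_sub, hcross]
  ring

namespace IsPiecewiseCost

variable {F : ℝ → ℝ → ℝ} {p q : ℝ}

lemma partial_fst_eq_zero_of_le (hF : IsPiecewiseCost b k F) (hx : x ≤ 0) (hy : y ≤ k)
    (hp : HasDerivWithinAt (fun t => F t y) p (Iic 0) x) : p = 0 := by
  have hconst : HasDerivWithinAt (fun t => F t y) 0 (Iic 0) x :=
    (hasDerivWithinAt_const x (Iic 0) (0 : ℝ)).congr (fun t ht => hF.eq_zero ht hy)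
      (hF.eq_zero hx hy)
  exact (uniqueDiffOn_Iic 0 x hx).eq_deriv _ hp hconst

lemma partial_snd_eq_zero_of_le (hF : IsPiecewiseCost b k F) (hk : 0 < k) (hx : x ≤ 0)
    (hy₀ : 0 ≤ y) (hy : y ≤ k) (hq : HasDerivWithinAt (F x) q (Ici 0) y) : q = 0 := by
  have hconst : HasDerivWithinAt (F x) 0 (Icc 0 k) y :=
    (hasDerivWithinAt_const y (Icc 0 k) (0 : ℝ)).congr (fun t ht => hF.eq_zero hx ht.2)
      (hF.eq_zero hx hy)
  exact (uniqueDiffOn_Icc hk y ⟨hy₀, hy⟩).eq_deriv _ (hq.mono Icc_subset_Ici_self) hconst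

lemma partial_fst_eq_zero_of_below (hF : IsPiecewiseCost b k F) (hx : x ≤ 0) (hy : k ≤ y)
    (hγ : x ≤ gammaStart b k y) (hp : HasDerivWithinAt (fun t => F t y) p (Iic 0) x) :
    p = 0 := by
  have hbelow (t) (ht : t ≤ x) : F t y = y - k - k * log (y / k) :=
    hF.below_curve (ht.trans hx) hy (ht.trans hγ)
  have hconst : HasDerivWithinAt (fun t => F t y) 0 (Iic x) x :=
    (hasDerivWithinAt_const x (Iic x) _).congr hbelow (hbelow x le_rfl)
  exact (uniqueDiffWithinAt_Iic x).eq_deriv _ (hp.mono (Iic_subset_Iic.2 hx)) hconst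

lemma partial_snd_of_below (hF : IsPiecewiseCost b k F) (hk : 0 < k) (hbk : b ≤ k)
    (hx : x ≤ 0) (hy : k < y) (hγ : x ≤ gammaStart b k y)
    (hq : HasDerivWithinAt (F x) q (Ici 0) y) : q = 1 - k / y := by
  have hy₀ : 0 < y := hk.trans hy
  have hbelow (t) (ht : t ∈ Icc k y) : F x t = t - k - k * log (t / k) :=
    hF.below_curve hx ht.1
      (hγ.trans ((strictAntiOn_gammaStart hk hbk).antitoneOn ht.1 hy.le ht.2))
  have hformula : HasDerivAt (fun t => t - k - k * log (t / k)) (1 - k / y) y := by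
    refine (((hasDerivAt_id y).sub_const k).fun_sub
      ((((hasDerivAt_id y).div_const k).log (div_pos hy₀ hk).ne').const_mul k)).congr_deriv ?_
    simp only [id]
    field_simp
  have hmem : y ∈ Icc k y := right_mem_Icc.2 hy.le
  exact (uniqueDiffOn_Icc hy y hmem).eq_deriv _ (hq.mono fun t ht => hk.le.trans ht.1)
    (hformula.hasDerivWithinAt.congr hbelow (hbelow y hmem))

lemma partial_fst_of_above (hF : IsPiecewiseCost b k F) (hb : 0 < b) (hbk : b ≤ k) (hy : k ≤ y)
    (hs : s ∈ Ico 0 (log (y / k)))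
    (hp : HasDerivWithinAt (fun t => F t y) p (Iic 0) (hitStart b y s)) :
    p = costSlope b k y s := by
  have hk : 0 < k := hb.trans_le hbk
  have hy₀ : 0 < y := hk.trans_le hy
  have hs' : s ∈ Icc 0 (log (y / k)) := Ico_subset_Icc_self hs
  have hlog : 0 < log (y / k) := hs.1.trans_lt hs.2
  have hmaps : MapsTo (hitStart b y) (Icc 0 (log (y / k))) (Iic 0) := fun t ht => by
    simpa using antitoneOn_hitStart hb hbk hy₀ hlog.le ht.2 ht.1
  have hchain := hp.comp s hasDerivAt_hitStart.hasDerivWithinAt hmaps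
  have hcost := ((hasDerivAt_fluidCost_comp (k := k) hb.ne' (hasDerivAt_const s y)
    (hasDerivAt_id s)).hasDerivWithinAt).congr (fun t ht => hF.above_curve hy ht)
    (hF.above_curve hy hs')
  have hslope : p * (b * exp s - y) = costSlope b k y s * (b * exp s - y) := by
    rw [(uniqueDiffOn_Icc hlog s hs').eq_deriv _ hchain hcost]
    simp only [id]
    ring
  have hne : b * exp s - y ≠ 0 := (sub_neg.2 (mul_exp_lt_of_lt_log hk hbk hy₀ hs.2)).ne
  exact mul_right_cancel₀ hne hslope

lemma partial_snd_of_axis (hF : IsPiecewiseCost b k F) (hb : b ≠ 0) (hk : 0 < k) (hy : k ≤ y)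
    (hq : HasDerivWithinAt (F 0) q (Ici 0) y) : q = costSlope b k y 0 := by
  have haxis (t) (ht : k ≤ t) : F 0 t = fluidCost b k t 0 := by
    simpa using hF.above_curve ht (left_mem_Icc.2 (log_nonneg ((one_le_div hk).2 ht)))
  have hcost := (hasDerivAt_fluidCost_comp (k := k) hb (hasDerivAt_id y)
    (hasDerivAt_const y 0)).hasDerivWithinAt.congr haxis (haxis y hy)
  have hslope := (uniqueDiffOn_Ici k y hy).eq_deriv _ (hq.mono (Ici_subset_Ici.2 hk.le)) hcost
  simpa using hslope

lemma comp_hitHeight_eventuallyEq (hF : IsPiecewiseCost b k F) (hk : 0 < k) (hs : 0 < s)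
    (hks : k * exp s < hitHeight b x s) :
    F x ∘ hitHeight b x =ᶠ[𝓝 s] fun t => fluidCost b k (hitHeight b x t) t := by
  have hnear : ∀ᶠ t in 𝓝 s, k * exp t < hitHeight b x t :=
    (continuous_exp.continuousAt.const_mul k).eventually_lt
      (hasDerivAt_hitHeight hs.ne').continuousAt hks
  filter_upwards [hnear, Ioi_mem_nhds hs] with t ht ht₀
  rw [mem_Ioi] at ht₀
  have hkt : k ≤ hitHeight b x t :=
    (le_mul_of_one_le_right hk.le (one_le_exp ht₀.le)).trans ht.le
  have htlog : t ≤ log (hitHeight b x t / k) :=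
    (le_log_iff_exp_le (div_pos (hk.trans_le hkt) hk)).2 ((le_div_iff₀' hk).2 ht.le)
  simpa only [Function.comp_apply, hitStart_hitHeight ht₀.ne'] using
    hF.above_curve hkt ⟨ht₀.le, htlog⟩

lemma partial_snd_of_above (hF : IsPiecewiseCost b k F) (hb : 0 < b) (hbk : b ≤ k) (hy : k ≤ y)
    (hs : s ∈ Ico 0 (log (y / k)))
    (hq : HasDerivWithinAt (F (hitStart b y s)) q (Ici 0) y) :
    q = 1 - exp (-s) + (1 + s) * costSlope b k y s := by
  have hk : 0 < k := hb.trans_le hbk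
  have hy₀ : 0 < y := hk.trans_le hy
  rcases hs.1.eq_or_lt with rfl | hs₀
  · rw [hitStart_zero_right] at hq
    simpa using hF.partial_snd_of_axis hb.ne' hk hy hq
  set x := hitStart b y s
  have hYs : hitHeight b x s = y := hitHeight_hitStart hs₀.ne'
  have hY := hasDerivAt_hitHeight (b := b) (x := x) hs₀.ne'
  have hchain := HasDerivAt.comp s (hYs ▸ hq.hasDerivAt (Ici_mem_nhds hy₀)) hY
  have hFcost : F x ∘ hitHeight b x =ᶠ[𝓝 s] fun t => fluidCost b k (hitHeight b x t) t :=
    hF.comp_hitHeight_eventuallyEq hk hs₀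
      (by simpa only [hYs] using mul_exp_lt_of_lt_log hk le_rfl hy₀ hs.2)
  have hcost :=
    (hasDerivAt_fluidCost_comp hb.ne' hY (hasDerivAt_id s)).congr_of_eventuallyEq hFcost
  have hslope : q * ((b * exp s - y) / s) =
      (b * exp s - y) / s * (1 - exp (-s) + costSlope b k y s) +
        (b * exp s - y) * costSlope b k y s := by
    simpa only [id, hYs, one_mul] using hchain.unique hcost
  have hne : b * exp s - y ≠ 0 := (sub_neg.2 (mul_exp_lt_of_lt_log hk hbk hy₀ hs.2)).ne
  refine mul_right_cancel₀ (div_ne_zero hne hs₀.ne') (hslope.trans ?_)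
  field_simp
  ring

theorem fluid_pde (hF : IsPiecewiseCost b k F) (hb : 0 < b) (hbk : b ≤ k) (hx : x ≤ 0)
    (hy : 0 ≤ y) (hp : HasDerivWithinAt (fun t => F t y) p (Iic 0) x)
    (hq : HasDerivWithinAt (F x) q (Ici 0) y) :
    (-x + y - b) * p - y * q = -max (y - k) 0 := by
  have hk : 0 < k := hb.trans_le hbk
  rcases le_or_gt y k with hyk | hyk
  · rw [hF.partial_fst_eq_zero_of_le hx hyk hp, hF.partial_snd_eq_zero_of_le hk hx hy hyk hq,
      max_eq_right (sub_nonpos.2 hyk)]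
    simp
  rw [max_eq_left (sub_nonneg.2 hyk.le)]
  rcases le_or_gt x (gammaStart b k y) with hγ | hγ
  · rw [hF.partial_fst_eq_zero_of_below hx hyk.le hγ hp,
      hF.partial_snd_of_below hk hbk hx hyk hγ hq]
    have := (hk.trans hyk).ne'
    field_simp
    ring
  · obtain ⟨s, hs, rfl⟩ := exists_hitStart_eq hk hyk.le hx hγ
    rw [hF.partial_fst_of_above hb hbk hyk.le hs hp, hF.partial_snd_of_above hb hbk hyk.le hs hq,
      hitStart, costSlope, exp_neg]
    have := exp_ne_zero s
    field_simp
    ring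

theorem partial_fst_eq_partial_snd (hF : IsPiecewiseCost b k F) (hb : 0 < b) (hbk : b ≤ k)
    (hy : 0 ≤ y) (hp : HasDerivWithinAt (fun t => F t y) p (Iic 0) 0)
    (hq : HasDerivWithinAt (F 0) q (Ici 0) y) : p = q := by
  have hk : 0 < k := hb.trans_le hbk
  rcases le_or_gt y k with hyk | hyk
  · rw [hF.partial_fst_eq_zero_of_le le_rfl hyk hp,
      hF.partial_snd_eq_zero_of_le hk le_rfl hy hyk hq]
  · have hlog : 0 < log (y / k) := log_pos ((one_lt_div hk).2 hyk)
    have hp₀ : p = costSlope b k y 0 :=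
      hF.partial_fst_of_above hb hbk hyk.le (left_mem_Ico.2 hlog) (by rwa [hitStart_zero_right])
    rw [hp₀,
      hF.partial_snd_of_axis hb.ne' hk hyk.le hq]

end IsPiecewiseCost

variable {n : ℕ} {β κ x1 x2 ν η : ℝ} {νs : ℝ → ℝ} {tau : ℝ → ℝ → ℝ}

lemma hitEq_iff_hitStart_eq : HitEq n β x1 x2 η ↔ hitStart (β / √n) x2 η = x1 := by
  have hfactor : β / √n - (x1 + β / √n) * exp (-η) - η * x2 * exp (-η) =
      (hitStart (β / √n) x2 η - x1) * exp (-η) := by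
    rw [hitStart, exp_neg]
    have := exp_ne_zero η
    field_simp
    ring
  rw [HitEq, hfactor, mul_eq_zero_iff_right (exp_ne_zero _), sub_eq_zero]

lemma GammaSol.gammaStart_eq (h : GammaSol n β κ x1 ν η) (hk : 0 < κ / √n) :
    gammaStart (β / √n) (κ / √n) ν = x1 := by
  obtain ⟨hν, -, hhit, hcross⟩ := h
  have hη : log (ν / (κ / √n)) = η := by
    rw [← hcross, div_mul_cancel_left₀ (hk.trans_le hν).ne', ← exp_neg, neg_neg, log_exp]
  rw [gammaStart, hη]
  exact hitEq_iff_hitStart_eq.1 (by rw [HitEq]; linarith)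

lemma GammaSol.le_iff_gammaStart_le (h : GammaSol n β κ x1 ν η) (hk : 0 < κ / √n)
    (hbk : β / √n ≤ κ / √n) (hx2 : κ / √n ≤ x2) :
    ν ≤ x2 ↔ gammaStart (β / √n) (κ / √n) x2 ≤ x1 := by
  rw [← h.gammaStart_eq hk, (strictAntiOn_gammaStart hk hbk).le_iff_ge hx2 h.1]

lemma fCand_of_curve_le (h : νs x1 ≤ x2) :
    fCand n β κ νs tau x1 x2 = fluidCost (β / √n) (κ / √n) x2 (tau x1 x2) := by
  rw [fCand, if_pos h, fluidCost, ← one_div_div β]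
  ring

lemma fCand_of_lt_curve (h : x2 < νs x1) (hx2 : κ / √n ≤ x2) :
    fCand n β κ νs tau x1 x2 = x2 - κ / √n - κ / √n * log (x2 / (κ / √n)) := by
  rw [fCand, if_neg h.not_ge, if_pos hx2, div_div_eq_mul_div, mul_comm x2]

lemma fCand_of_lt (h : κ / √n ≤ νs x1) (hx2 : x2 < κ / √n) :
    fCand n β κ νs tau x1 x2 = 0 := by
  rw [fCand, if_neg (hx2.trans_le h).not_ge, if_neg hx2.not_ge]

lemma isLeast_hitEq (hb : 0 < β / √n) (hx2 : 0 < x2) (hη : η ∈ Icc 0 (log (x2 / (β / √n)))) :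
    IsLeast {t | 0 ≤ t ∧ HitEq n β (hitStart (β / √n) x2 η) x2 t} η := by
  simpa only [hitEq_iff_hitStart_eq] using isLeast_hitStart_fiber hb hx2 hη

lemma fCand_hitStart (hb : 0 < β / √n) (hbk : β / √n ≤ κ / √n)
    (hνs : ∀ x1 ≤ (0 : ℝ), ∃ η, GammaSol n β κ x1 (νs x1) η)
    (htau : ∀ x1 x2 η, IsLeast {t | 0 ≤ t ∧ HitEq n β x1 x2 t} η → tau x1 x2 = η)
    (hx2 : κ / √n ≤ x2) (hη : η ∈ Icc 0 (log (x2 / (κ / √n)))) :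
    fCand n β κ νs tau (hitStart (β / √n) x2 η) x2 = fluidCost (β / √n) (κ / √n) x2 η := by
  have hk : 0 < κ / √n := hb.trans_le hbk
  have hx2₀ : 0 < x2 := hk.trans_le hx2
  have hanti := antitoneOn_hitStart hb hbk hx2₀
  have hstart : hitStart (β / √n) x2 η ≤ 0 := by
    simpa using hanti (hη.1.trans hη.2) hη.2 hη.1
  obtain ⟨_, hγ⟩ := hνs _ hstart
  have hcurve : νs (hitStart (β / √n) x2 η) ≤ x2 :=
    (hγ.le_iff_gammaStart_le hk hbk hx2).2 (hanti hη.2 self_mem_Iic hη.2)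
  have hleast := isLeast_hitEq hb hx2₀
    ⟨hη.1, hη.2.trans (log_div_le_log_div_of_le hb hbk hx2₀)⟩
  rw [fCand_of_curve_le hcurve, htau _ _ _ hleast]

lemma fCand_of_le_gammaStart (hb : 0 < β / √n) (hbk : β / √n ≤ κ / √n)
    (hνs : ∀ x1 ≤ (0 : ℝ), ∃ η, GammaSol n β κ x1 (νs x1) η)
    (htau : ∀ x1 x2 η, IsLeast {t | 0 ≤ t ∧ HitEq n β x1 x2 t} η → tau x1 x2 = η)
    (hx1 : x1 ≤ 0) (hx2 : κ / √n ≤ x2) (hγ : x1 ≤ gammaStart (β / √n) (κ / √n) x2) :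
    fCand n β κ νs tau x1 x2 = x2 - κ / √n - κ / √n * log (x2 / (κ / √n)) := by
  have hk : 0 < κ / √n := hb.trans_le hbk
  rcases lt_or_ge x2 (νs x1) with hlt | hge
  · exact fCand_of_lt_curve hlt hx2
  · obtain ⟨_, hν⟩ := hνs x1 hx1
    have hstart : x1 = hitStart (β / √n) x2 (log (x2 / (κ / √n))) :=
      hγ.antisymm ((hν.le_iff_gammaStart_le hk hbk hx2).1 hge)
    have hlog : 0 ≤ log (x2 / (κ / √n)) := log_nonneg ((one_le_div hk).2 hx2)
    rw [hstart, fCand_hitStart hb hbk hνs htau hx2 (right_mem_Icc.2 hlog),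
      fluidCost_log hk (hk.trans_le hx2)]

theorem isPiecewiseCost_fCand (hb : 0 < β / √n) (hbk : β / √n ≤ κ / √n)
    (hνs : ∀ x1 ≤ (0 : ℝ), ∃ η, GammaSol n β κ x1 (νs x1) η)
    (htau : ∀ x1 x2 η, IsLeast {t | 0 ≤ t ∧ HitEq n β x1 x2 t} η → tau x1 x2 = η) :
    IsPiecewiseCost (β / √n) (κ / √n) (fCand n β κ νs tau) where
  above_curve hy hs := fCand_hitStart hb hbk hνs htau hy hs
  below_curve hx hy hγ := fCand_of_le_gammaStart hb hbk hνs htau hx hy hγ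
  eq_zero {x y} hx hy := by
    have hk : 0 < κ / √n := hb.trans_le hbk
    rcases hy.eq_or_lt with rfl | hlt
    · rw [fCand_of_le_gammaStart hb hbk hνs htau hx le_rfl (by rwa [gammaStart_self]),
        div_self hk.ne', log_one, mul_zero, sub_self, sub_zero]
    · obtain ⟨_, hν⟩ := hνs x hx
      exact fCand_of_lt hν.1 hlt

end

theorem stmt11_general (n : ℕ) (hn : 1 ≤ n) (β κ : ℝ) (hβ : 0 < β) (hκ : β ≤ κ)
    (νs : ℝ → ℝ)
    (hνs : ∀ x1 ≤ (0 : ℝ), ∃ η : ℝ, GammaSol n β κ x1 (νs x1) η)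
    (tau : ℝ → ℝ → ℝ)
    (htau : ∀ x1 x2 η : ℝ, 0 ≤ η → HitEq n β x1 x2 η →
      (∀ η' : ℝ, 0 ≤ η' → HitEq n β x1 x2 η' → η ≤ η') → tau x1 x2 = η)
    (f1 f2 : ℝ → ℝ → ℝ)
    (hf1 : ∀ x1 ≤ (0 : ℝ), ∀ x2 : ℝ, 0 ≤ x2 →
      HasDerivWithinAt (fun t => fCand n β κ νs tau t x2) (f1 x1 x2) (Set.Iic 0) x1)
    (hf2 : ∀ x1 ≤ (0 : ℝ), ∀ x2 : ℝ, 0 ≤ x2 →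
      HasDerivWithinAt (fun t => fCand n β κ νs tau x1 t) (f2 x1 x2) (Set.Ici 0) x2) :
    (∀ x1 ≤ (0 : ℝ), ∀ x2 : ℝ, 0 ≤ x2 →
      (-x1 + x2 - β / Real.sqrt n) * f1 x1 x2 - x2 * f2 x1 x2 =
        -max (x2 - κ / Real.sqrt n) 0) ∧
    (∀ x2 : ℝ, 0 ≤ x2 → f1 0 x2 = f2 0 x2) := by
  have hs : 0 < √(n : ℝ) := Real.sqrt_pos.2 (Nat.cast_pos.2 hn)
  have hb : 0 < β / √n := div_pos hβ hs
  have hbk : β / √n ≤ κ / √n := div_le_div_of_nonneg_right hκ hs.le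
  have hF := isPiecewiseCost_fCand hb hbk hνs fun x1 x2 η h =>
    htau x1 x2 η h.1.1 h.1.2 fun η' h₀ h' => h.2 ⟨h₀, h'⟩
  exact ⟨fun x1 hx1 x2 hx2 => hF.fluid_pde hb hbk hx1 hx2 (hf1 x1 hx1 x2 hx2) (hf2 x1 hx1 x2 hx2),
    fun x2 hx2 => hF.partial_fst_eq_partial_snd hb hbk hx2 (hf1 0 le_rfl x2 hx2)
      (hf2 0 le_rfl x2 hx2)⟩

/-- Fix `κ > β`.  The piecewise-defined function `f = fCand` solves the
fluid PDE for `h(x) = max(x₂ - κ/√n, 0)`: with `f1, f2` its (one-sided at the boundary)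
first-order partial derivatives on `Ω`, one has
`(-x₁ + x₂ - β/√n) f1(x) - x₂ f2(x) = -max(x₂ - κ/√n, 0)` for all `x ∈ Ω`, and
`f1(0, x₂) = f2(0, x₂)` for all `x₂ ≥ 0`. -/
theorem stmt11 (n : ℕ) (hn : 1 ≤ n) (β κ : ℝ) (hβ : 0 < β) (hκ : β < κ)
    (νs : ℝ → ℝ)
    (hνs : ∀ x1 ≤ (0 : ℝ), ∃ η : ℝ, GammaSol n β κ x1 (νs x1) η)
    (tau : ℝ → ℝ → ℝ)
    (htau : ∀ x1 x2 η : ℝ, 0 ≤ η → HitEq n β x1 x2 η →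
      (∀ η' : ℝ, 0 ≤ η' → HitEq n β x1 x2 η' → η ≤ η') → tau x1 x2 = η)
    (f1 f2 : ℝ → ℝ → ℝ)
    (hf1 : ∀ x1 ≤ (0 : ℝ), ∀ x2 : ℝ, 0 ≤ x2 →
      HasDerivWithinAt (fun t => fCand n β κ νs tau t x2) (f1 x1 x2) (Set.Iic 0) x1)
    (hf2 : ∀ x1 ≤ (0 : ℝ), ∀ x2 : ℝ, 0 ≤ x2 →
      HasDerivWithinAt (fun t => fCand n β κ νs tau x1 t) (f2 x1 x2) (Set.Ici 0) x2) :
    (∀ x1 ≤ (0 : ℝ), ∀ x2 : ℝ, 0 ≤ x2 →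
      (-x1 + x2 - β / Real.sqrt n) * f1 x1 x2 - x2 * f2 x1 x2 =
        -max (x2 - κ / Real.sqrt n) 0) ∧
    (∀ x2 : ℝ, 0 ≤ x2 → f1 0 x2 = f2 0 x2) :=
  stmt11_general n hn β κ hβ hκ.le νs hνs tau htau f1 f2 hf1 hf2
end

section
/- Fix κ_1 and κ_2 with β < κ_1 < κ_2. There exist functions f^(1), f^(2) ∈ C²(Ω) such that: (i) (−x_1 + x_2 − β/√n)·f^(1)_1(x) − x_2·f^(1)_2(x) = −φ^{(κ_1/√n, κ_2/√n)}(−x_1) for all x ∈ Ω and f^(1)_1(0, x_2) = f^(1)_2(0, x_2) for all x_2 ≥ 0; (ii) (−x_1 + x_2 − β/√n)·f^(2)_1(x) − x_2·f^(2)_2(x) = −φ^{(κ_1/√n, κ_2/√n)}(x_2) for all x ∈ Ω and f^(2)_1(0, x_2) = f^(2)_2(0, x_2) for all x_2 ≥ 0; (iii) f^(1)(x) ≤ log((κ_2 − β)/(κ_1 − β)) and f^(2)(x) ≤ log(κ_2/κ_1) + (κ_2 − κ_1)/β for all x ∈ [−κ_2/√n, 0] × [0, κ_2/√n]; and (iv)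 for all x ∈ Ω: |f^(1)_1(x)| ≤ (4√n/(κ_2 − κ_1))·log((κ_2 − β)/(κ_1 − β)), |f^(1)_{11}(x)| ≤ (12n/(κ_2 − κ_1)²)·log((κ_2 − β)/(κ_1 − β)), |f^(2)_1(x)| ≤ √n/β, and |f^(2)_{11}(x)| ≤ (n/(β(κ_1 − β)))·(1 + (κ_1/(κ_1 − β))·(4(κ_1 − β)/(κ_2 − κ_1))). -/
/-- The smoothed indicator `φ^{(ℓ,u)}`. -/
noncomputable def phiSm (l u x : ℝ) : ℝ :=
  if x ≤ l then 0
  else if x ≤ (u + l) / 2 then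
    (x - l) ^ 2 * (-(x - l) / (((u + l) / 2 - l) ^ 2 * (u - l)) +
      2 / (((u + l) / 2 - l) * (u - l)))
  else if x ≤ u then
    1 - (x - u) ^ 2 * ((x - u) / (((u + l) / 2 - u) ^ 2 * (u - l)) -
      2 / (((u + l) / 2 - u) * (u - l)))
  else 1

/-!
The left-hand side of the Poisson equation differentiates `f` along `v₁' = -v₁ + v₂ - b`,
`v₂' = -v₂`, so along this flow a solution decreases at the rate `h`.

For `φ(-x₁)`, the integral of `φ(-v₁(t))` over all `t > 0` is a solution. The boundary condition
costs nothing: from `x₁ = 0` the trajectory that ignores the boundary keeps `-v₁ ≤ b`, where `φ` and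
`φ'` vanish. Derivatives of `f` replace `φ` by its derivatives, and each such integral is controlled
by the time `-v₁` spends in `[l, u]`, which is at most `log ((u - b) / (l - b))`.

For `φ(x₂)`, the equation is solved along the characteristics, the level sets of
`(x₁ + b) / x₂ + log x₂`, up to a function of this invariant. The boundary condition prescribes the
derivative of that function in terms of the height at which the characteristic meets `x₁ = 0`.
-/

open MeasureTheory Set Filter Topology
open scoped NNReal

/-- `f` is a classical solution on `(-∞, 0] × [0, ∞)` of the Poisson equation
`(-x₁ + x₂ - b) f₁ - x₂ f₂ = -h` with oblique boundary condition `f₁ = f₂` on `x₁ = 0`. The partial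
derivatives `f₁`, `f₂`, `f₁₁` are carried as data, since one-sided derivatives are meant at boundary
points. -/
structure IsPoissonSolution (b : ℝ) (h f f₁ f₂ f₁₁ : ℝ → ℝ → ℝ) : Prop where
  contDiffOn : ContDiffOn ℝ 2 (fun p : ℝ × ℝ => f p.1 p.2) (Iic 0 ×ˢ Ici 0)
  hasDerivWithinAt_fst : ∀ x₁ ≤ 0, ∀ x₂, 0 ≤ x₂ →
    HasDerivWithinAt (fun t => f t x₂) (f₁ x₁ x₂) (Iic 0) x₁
  hasDerivWithinAt_snd : ∀ x₁ ≤ 0, ∀ x₂, 0 ≤ x₂ →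
    HasDerivWithinAt (fun t => f x₁ t) (f₂ x₁ x₂) (Ici 0) x₂
  hasDerivWithinAt_fst_fst : ∀ x₁ ≤ 0, ∀ x₂, 0 ≤ x₂ →
    HasDerivWithinAt (fun t => f₁ t x₂) (f₁₁ x₁ x₂) (Iic 0) x₁
  poisson : ∀ x₁ ≤ 0, ∀ x₂, 0 ≤ x₂ →
    (-x₁ + x₂ - b) * f₁ x₁ x₂ - x₂ * f₂ x₁ x₂ = -h x₁ x₂
  boundary : ∀ x₂, 0 ≤ x₂ → f₁ 0 x₂ = f₂ 0 x₂

lemma deriv_eq_zero_of_eqOn_Iic {f : ℝ → ℝ} {a c x : ℝ} (hf : DifferentiableAt ℝ f x)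
    (hc : EqOn f (fun _ => c) (Iic a)) (hx : x ≤ a) : deriv f x = 0 := by
  have hIic : EqOn f (fun _ => c) (Iic x) := hc.mono (Iic_subset_Iic.2 hx)
  rw [← hf.derivWithin (uniqueDiffWithinAt_Iic x), derivWithin_congr hIic (hIic self_mem_Iic),
    derivWithin_fun_const, Pi.zero_apply]

lemma deriv_eq_zero_of_notMem_Icc {f : ℝ → ℝ} {l u c d : ℝ} (hl : EqOn f (fun _ => c) (Iio l))
    (hu : EqOn f (fun _ => d) (Ioi u)) {x : ℝ} (hx : x ∉ Icc l u) : deriv f x = 0 := by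
  rcases lt_or_ge x l with h | h
  · rw [hl.deriv isOpen_Iio h, deriv_const]
  · have hux : u < x := not_le.1 fun hxu => hx ⟨h, hxu⟩
    rw [hu.deriv isOpen_Ioi hux, deriv_const]

section SmoothedIndicator

variable {l u : ℝ}

lemma hasDerivAt_max_zero_pow (k : ℕ) (x : ℝ) :
    HasDerivAt (fun y : ℝ => max y 0 ^ (k + 2)) ((k + 2) * max x 0 ^ (k + 1)) x := by
  refine hasDerivAt_of_hasDerivAt_of_ne' (x := 0)
    (g := fun y : ℝ => (k + 2) * max y 0 ^ (k + 1)) (fun y hy => ?_) (by fun_prop) (by fun_prop) x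
  rcases hy.lt_or_gt with hneg | hpos
  · refine (hasDerivAt_const y (0 : ℝ)).congr_of_eventuallyEq ?_ |>.congr_deriv ?_
    · filter_upwards [Iio_mem_nhds hneg] with z hz
      simp [max_eq_right (mem_Iio.1 hz).le]
    · simp [max_eq_right hneg.le]
  · refine (hasDerivAt_pow (k + 2) y).congr_of_eventuallyEq ?_ |>.congr_deriv ?_
    · filter_upwards [Ioi_mem_nhds hpos] with z hz
      rw [max_eq_left (le_of_lt hz)]
    · simp [max_eq_left hpos.le]

lemma contDiffAt_max_zero {n : WithTop ℕ∞} {x : ℝ} (hx : x ≠ 0) :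
    ContDiffAt ℝ n (fun y : ℝ => max y 0) x := by
  rcases hx.lt_or_gt with hneg | hpos
  · refine contDiffAt_const.congr_of_eventuallyEq (f := fun _ => (0 : ℝ)) ?_
    filter_upwards [Iio_mem_nhds hneg] with y hy using max_eq_right (le_of_lt hy)
  · refine contDiffAt_id.congr_of_eventuallyEq ?_
    filter_upwards [Ioi_mem_nhds hpos] with y hy using max_eq_left (le_of_lt hy)

lemma phiSm_eq_truncatedPowers (hlu : l < u) (x : ℝ) :
    phiSm l u x =
      4 / (u - l) ^ 2 *
          (max (x - l) 0 ^ 2 + max (x - (u + l) / 2) 0 ^ 2 + max (x - u) 0 ^ 2) +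
        4 / (u - l) ^ 3 * (max (x - u) 0 ^ 3 - max (x - l) 0 ^ 3) := by
  have hd : u - l ≠ 0 := by linarith
  have half_left : (u + l) / 2 - l = (u - l) / 2 := by ring
  have half_right : (u + l) / 2 - u = -((u - l) / 2) := by ring
  unfold phiSm
  rw [half_left, half_right]
  split_ifs with h1 h2 h3
  · rw [max_eq_right (by linarith : x - l ≤ 0), max_eq_right (by linarith : x - (u + l) / 2 ≤ 0),
      max_eq_right (by linarith : x - u ≤ 0)]
    ring
  · rw [max_eq_left (by linarith : 0 ≤ x - l), max_eq_right (by linarith : x - (u + l) / 2 ≤ 0),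
      max_eq_right (by linarith : x - u ≤ 0)]
    field_simp
    ring
  · rw [max_eq_left (by linarith : 0 ≤ x - l), max_eq_left (by linarith : 0 ≤ x - (u + l) / 2),
      max_eq_right (by linarith : x - u ≤ 0)]
    field_simp
    ring
  · rw [max_eq_left (by linarith : 0 ≤ x - l), max_eq_left (by linarith : 0 ≤ x - (u + l) / 2),
      max_eq_left (by linarith : 0 ≤ x - u)]
    field_simp
    ring

/-- The parabolic arc of half-width `r` centred at `c`, cut off at zero. The derivative of the
smoothed indicator is a multiple of the maximum of two such arcs, from which its sign, its size
and its Lipschitz constant can be read off. -/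
def parabolicBump (r c x : ℝ) : ℝ := max (r ^ 2 - (x - c) ^ 2) 0

lemma parabolicBump_nonneg (r c x : ℝ) : 0 ≤ parabolicBump r c x := le_max_right _ _

lemma parabolicBump_le (r c x : ℝ) : parabolicBump r c x ≤ r ^ 2 :=
  max_le (by linarith [sq_nonneg (x - c)]) (sq_nonneg r)

lemma parabolicBump_eq_zero {r c x : ℝ} (hr : 0 ≤ r) (hx : r ≤ |x - c|) :
    parabolicBump r c x = 0 := by
  refine max_eq_right (sub_nonpos.2 ?_)
  rw [← sq_abs (x - c)]
  gcongr

lemma parabolicBump_of_abs_le {r c x : ℝ} (hx : |x - c| ≤ r) :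
    parabolicBump r c x = r ^ 2 - (x - c) ^ 2 := by
  refine max_eq_left (sub_nonneg.2 ?_)
  rw [← sq_abs (x - c)]
  gcongr

lemma parabolicBump_eq_sq_sub_min_sq {r : ℝ} (hr : 0 ≤ r) (c x : ℝ) :
    parabolicBump r c x = r ^ 2 - min |x - c| r ^ 2 := by
  rcases le_total |x - c| r with h | h
  · rw [parabolicBump_of_abs_le h, min_eq_left h, sq_abs]
  · rw [parabolicBump_eq_zero hr h, min_eq_right h, sub_self]

lemma abs_parabolicBump_sub_le {r : ℝ} (hr : 0 ≤ r) (c x y : ℝ) :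
    |parabolicBump r c x - parabolicBump r c y| ≤ 2 * r * |x - y| := by
  have min_nonneg (z : ℝ) : 0 ≤ min |z - c| r := le_min (abs_nonneg _) hr
  have hsum : |min |y - c| r + min |x - c| r| ≤ 2 * r := by
    rw [abs_of_nonneg (add_nonneg (min_nonneg y) (min_nonneg x)), two_mul]
    exact add_le_add (min_le_right _ _) (min_le_right _ _)
  have hdiff : |min |y - c| r - min |x - c| r| ≤ |x - y| :=
    calc |min |y - c| r - min |x - c| r| ≤ |(|y - c| - |x - c|)| := by
          simpa using abs_min_sub_min_le_max |y - c| r |x - c| r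
      _ ≤ |(y - c) - (x - c)| := abs_abs_sub_abs_le_abs_sub _ _
      _ = |x - y| := by rw [sub_sub_sub_cancel_right, abs_sub_comm]
  rw [parabolicBump_eq_sq_sub_min_sq hr, parabolicBump_eq_sq_sub_min_sq hr, sub_sub_sub_cancel_left,
    sq_sub_sq, abs_mul]
  exact mul_le_mul hsum hdiff (abs_nonneg _) (by positivity)

lemma deriv_truncatedPowers_eq_max_parabolicBump (hlu : l < u) (x : ℝ) :
    4 / (u - l) ^ 2 *
          (2 * max (x - l) 0 + 2 * max (x - (u + l) / 2) 0 + 2 * max (x - u) 0) +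
        4 / (u - l) ^ 3 * (3 * max (x - u) 0 ^ 2 - 3 * max (x - l) 0 ^ 2) =
      12 / (u - l) ^ 3 *
        max (parabolicBump ((u - l) / 3) ((2 * l + u) / 3) x)
          (parabolicBump ((u - l) / 3) ((l + 2 * u) / 3) x) := by
  have hd : 0 < u - l := by linarith
  have hr : 0 ≤ (u - l) / 3 := by linarith
  rcases le_total x l with hl | hl
  · rw [parabolicBump_eq_zero hr (le_abs'.2 (.inl (by linarith))),
      parabolicBump_eq_zero hr (le_abs'.2 (.inl (by linarith))),
      max_eq_right (by linarith : x - l ≤ 0), max_eq_right (by linarith : x - (u + l) / 2 ≤ 0),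
      max_eq_right (by linarith : x - u ≤ 0)]
    simp
  rcases le_total u x with hu | hu
  · rw [parabolicBump_eq_zero hr (le_abs'.2 (.inr (by linarith))),
      parabolicBump_eq_zero hr (le_abs'.2 (.inr (by linarith))),
      max_eq_left (by linarith : 0 ≤ x - l), max_eq_left (by linarith : 0 ≤ x - (u + l) / 2),
      max_eq_left (by linarith : 0 ≤ x - u), max_self]
    field_simp
    ring
  rw [max_eq_left (by linarith : 0 ≤ x - l), max_eq_right (by linarith : x - u ≤ 0)]
  rcases le_total x ((u + l) / 2) with hm | hm
  · have hmax : parabolicBump ((u - l) / 3) ((l + 2 * u) / 3) x ≤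
        parabolicBump ((u - l) / 3) ((2 * l + u) / 3) x :=
      max_le_max (by nlinarith) le_rfl
    rw [max_eq_left hmax, parabolicBump_of_abs_le (abs_le.2 ⟨by linarith, by linarith⟩),
      max_eq_right (by linarith : x - (u + l) / 2 ≤ 0)]
    field_simp
    ring
  · have hmax : parabolicBump ((u - l) / 3) ((2 * l + u) / 3) x ≤
        parabolicBump ((u - l) / 3) ((l + 2 * u) / 3) x :=
      max_le_max (by nlinarith) le_rfl
    rw [max_eq_right hmax, parabolicBump_of_abs_le (abs_le.2 ⟨by linarith, by linarith⟩),
      max_eq_left (by linarith : 0 ≤ x - (u + l) / 2)]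
    field_simp
    ring

lemma hasDerivAt_phiSm (hlu : l < u) (x : ℝ) :
    HasDerivAt (phiSm l u)
      (12 / (u - l) ^ 3 *
        max (parabolicBump ((u - l) / 3) ((2 * l + u) / 3) x)
          (parabolicBump ((u - l) / 3) ((l + 2 * u) / 3) x)) x := by
  have hsq (c : ℝ) : HasDerivAt (fun y => max (y - c) 0 ^ 2) (2 * max (x - c) 0) x := by
    simpa using (hasDerivAt_max_zero_pow 0 (x - c)).comp_sub_const x c
  have hcube (c : ℝ) : HasDerivAt (fun y => max (y - c) 0 ^ 3) (3 * max (x - c) 0 ^ 2) x := by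
    refine ((hasDerivAt_max_zero_pow 1 (x - c)).comp_sub_const x c).congr_deriv ?_
    norm_num
  rw [funext (phiSm_eq_truncatedPowers hlu), ← deriv_truncatedPowers_eq_max_parabolicBump hlu]
  exact ((((hsq l).add (hsq _)).add (hsq u)).const_mul _).add
    (((hcube u).sub (hcube l)).const_mul _)

lemma deriv_phiSm (hlu : l < u) (x : ℝ) :
    deriv (phiSm l u) x =
      12 / (u - l) ^ 3 *
        max (parabolicBump ((u - l) / 3) ((2 * l + u) / 3) x)
          (parabolicBump ((u - l) / 3) ((l + 2 * u) / 3) x) :=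
  (hasDerivAt_phiSm hlu x).deriv

lemma deriv_phiSm_nonneg (hlu : l < u) (x : ℝ) : 0 ≤ deriv (phiSm l u) x := by
  rw [deriv_phiSm hlu]
  have : 0 < u - l := sub_pos.2 hlu
  exact mul_nonneg (by positivity) (le_max_of_le_left (parabolicBump_nonneg _ _ _))

lemma abs_deriv_phiSm_le (hlu : l < u) (x : ℝ) : |deriv (phiSm l u) x| ≤ 4 / (u - l) := by
  have hd : 0 < u - l := sub_pos.2 hlu
  rw [abs_of_nonneg (deriv_phiSm_nonneg hlu x), deriv_phiSm hlu]
  calc _ ≤ 12 / (u - l) ^ 3 * ((u - l) / 3) ^ 2 := by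
        gcongr
        exact max_le (parabolicBump_le _ _ _) (parabolicBump_le _ _ _)
    _ = 4 / 3 / (u - l) := by field_simp; norm_num
    _ ≤ 4 / (u - l) := by gcongr; norm_num

lemma lipschitzWith_deriv_phiSm (hlu : l < u) :
    LipschitzWith (Real.toNNReal (12 / (u - l) ^ 2)) (deriv (phiSm l u)) := by
  have hd : 0 < u - l := sub_pos.2 hlu
  refine LipschitzWith.of_dist_le' fun x y => ?_
  rw [Real.dist_eq, Real.dist_eq, deriv_phiSm hlu, deriv_phiSm hlu, ← mul_sub, abs_mul,
    abs_of_pos (by positivity : 0 < 12 / (u - l) ^ 3)]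
  calc _ ≤ 12 / (u - l) ^ 3 * (2 * ((u - l) / 3) * |x - y|) := by
        gcongr
        exact (abs_max_sub_max_le_max _ _ _ _).trans (max_le
          (abs_parabolicBump_sub_le (by positivity) _ _ _)
          (abs_parabolicBump_sub_le (by positivity) _ _ _))
    _ = 8 / (u - l) ^ 2 * |x - y| := by field_simp; ring
    _ ≤ 12 / (u - l) ^ 2 * |x - y| := by gcongr; norm_num

lemma contDiff_phiSm (hlu : l < u) : ContDiff ℝ 1 (phiSm l u) :=
  contDiff_one_iff_deriv.2
    ⟨fun x => (hasDerivAt_phiSm hlu x).differentiableAt, (lipschitzWith_deriv_phiSm hlu).continuous⟩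

lemma contDiffAt_deriv_phiSm (hlu : l < u) {x : ℝ} (hx : x ∉ ({l, (u + l) / 2, u} : Set ℝ)) :
    ContDiffAt ℝ 1 (deriv (phiSm l u)) x := by
  simp only [mem_insert_iff, mem_singleton_iff, not_or] at hx
  have hknot {c : ℝ} (hc : x ≠ c) : ContDiffAt ℝ 2 (fun y => max (y - c) 0) x :=
    (contDiffAt_max_zero (sub_ne_zero.2 hc)).comp x (contDiffAt_id.sub contDiffAt_const)
  have hl := hknot hx.1
  have hm := hknot hx.2.1
  have hu := hknot hx.2.2
  have : ContDiffAt ℝ 2 (phiSm l u) x := by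
    rw [funext (phiSm_eq_truncatedPowers hlu)]
    fun_prop
  exact this.derivWithin (by norm_num)

lemma phiSm_of_le {x : ℝ} (hx : x ≤ l) : phiSm l u x = 0 := if_pos hx

lemma phiSm_of_ge (hlu : l < u) {x : ℝ} (hx : u ≤ x) : phiSm l u x = 1 := by
  rw [phiSm_eq_truncatedPowers hlu, max_eq_left (by linarith), max_eq_left (by linarith),
    max_eq_left (by linarith)]
  have : u - l ≠ 0 := by linarith
  field_simp
  ring

lemma monotone_phiSm (hlu : l < u) : Monotone (phiSm l u) :=
  monotone_of_deriv_nonneg ((contDiff_phiSm hlu).differentiable one_ne_zero)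
    (deriv_phiSm_nonneg hlu)

lemma phiSm_mem_Icc (hlu : l < u) (x : ℝ) : phiSm l u x ∈ Icc (0 : ℝ) 1 :=
  ⟨(phiSm_of_le (min_le_right x l)).symm.le.trans (monotone_phiSm hlu (min_le_left x l)),
    (monotone_phiSm hlu (le_max_left x u)).trans (phiSm_of_ge hlu (le_max_right x u)).le⟩

lemma lipschitzWith_phiSm (hlu : l < u) :
    LipschitzWith (Real.toNNReal (4 / (u - l))) (phiSm l u) := by
  refine lipschitzWith_of_nnnorm_deriv_le ((contDiff_phiSm hlu).differentiable one_ne_zero)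
    fun x => ?_
  rw [← NNReal.coe_le_coe, coe_nnnorm, Real.norm_eq_abs,
    Real.coe_toNNReal _ (div_nonneg zero_le_four (sub_nonneg.2 hlu.le))]
  exact abs_deriv_phiSm_le hlu x

end SmoothedIndicator

section IdleFlow

variable {b l u C : ℝ} {ψ : ℝ → ℝ} {K : ℝ≥0} {S : Set ℝ}

lemma integrableOn_pow_mul_exp_neg_pow (k j : ℕ) :
    IntegrableOn (fun t : ℝ => t ^ k * Real.exp (-t) ^ (j + 1)) (Ioi 0) := by
  have hGamma := Real.GammaIntegral_convergent (s := k + 1) (by positivity)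
  refine Integrable.mono' hGamma (by fun_prop) ?_
  filter_upwards [ae_restrict_mem measurableSet_Ioi] with t ht
  have ht' : 0 ≤ t := le_of_lt ht
  rw [add_sub_cancel_right, Real.rpow_natCast, Real.norm_eq_abs, abs_of_nonneg (by positivity),
    mul_comm]
  gcongr
  exact pow_le_of_le_one (Real.exp_pos _).le (Real.exp_le_one_iff.2 (by linarith)) j.succ_ne_zero

/-- Minus the first coordinate, at time `t`, of the solution started at `p` of the linear system
`v₁' = -v₁ + v₂ - b`, `v₂' = -v₂`, whose generator is the left-hand side of the Poisson equation;
the reflection at `v₁ = 0` is ignored. -/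
noncomputable def idleFlow (b : ℝ) (p : ℝ × ℝ) (t : ℝ) : ℝ :=
  b - (p.1 + b + p.2 * t) * Real.exp (-t)

/-- The integral over all times `t > 0` of `ψ` along the flow, with weight `tᵏ e⁻ʲᵗ`. Derivatives
of these functions in the starting point are functions of the same form. -/
noncomputable def flowMoment (b : ℝ) (ψ : ℝ → ℝ) (k j : ℕ) (p : ℝ × ℝ) : ℝ :=
  ∫ t in Ioi (0 : ℝ), ψ (idleFlow b p t) * (t ^ k * Real.exp (-t) ^ j)

lemma idleFlow_zero (b : ℝ) (p : ℝ × ℝ) : idleFlow b p 0 = -p.1 := by simp [idleFlow]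

lemma continuous_idleFlow (b : ℝ) (p : ℝ × ℝ) : Continuous (idleFlow b p) := by
  unfold idleFlow
  fun_prop

lemma tendsto_idleFlow (b : ℝ) (p : ℝ × ℝ) : Tendsto (idleFlow b p) atTop (𝓝 b) := by
  have hexp : Tendsto (fun t : ℝ => Real.exp (-t)) atTop (𝓝 0) := by
    simpa using Real.tendsto_pow_mul_exp_neg_atTop_nhds_zero 0
  have hmul_exp : Tendsto (fun t : ℝ => t * Real.exp (-t)) atTop (𝓝 0) := by
    simpa using Real.tendsto_pow_mul_exp_neg_atTop_nhds_zero 1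
  have := ((hexp.const_mul (p.1 + b)).add (hmul_exp.const_mul p.2)).const_sub b
  simp only [mul_zero, add_zero, sub_zero] at this
  refine this.congr fun t => ?_
  unfold idleFlow
  ring

lemma hasDerivAt_idleFlow (b : ℝ) (p : ℝ × ℝ) (t : ℝ) :
    HasDerivAt (idleFlow b p) ((p.1 + b - p.2 + p.2 * t) * Real.exp (-t)) t := by
  have hlin : HasDerivAt (fun t : ℝ => p.1 + b + p.2 * t) p.2 t := by
    simpa using ((hasDerivAt_id t).const_mul p.2).const_add (p.1 + b)
  have hexp : HasDerivAt (fun t : ℝ => Real.exp (-t)) (-Real.exp (-t)) t := by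
    simpa using (hasDerivAt_neg t).exp
  refine ((hlin.mul hexp).const_sub b).congr_deriv ?_
  ring

lemma hasFDerivAt_idleFlow (b : ℝ) (p : ℝ × ℝ) (t : ℝ) :
    HasFDerivAt (fun q => idleFlow b q t)
      (-(Real.exp (-t) • ContinuousLinearMap.fst ℝ ℝ ℝ +
        (t * Real.exp (-t)) • ContinuousLinearMap.snd ℝ ℝ ℝ)) p := by
  have h := (((hasFDerivAt_fst (𝕜 := ℝ) (p := p)).add_const b).add
    ((hasFDerivAt_snd (𝕜 := ℝ) (p := p)).mul_const t)).mul_const (Real.exp (-t))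
  refine (h.const_sub b).congr_fderiv ?_
  ext <;> simp; ring

lemma abs_idleFlow_sub_le {t : ℝ} (ht : 0 ≤ t) (p q : ℝ × ℝ) :
    |idleFlow b p t - idleFlow b q t| ≤ (1 + t) * Real.exp (-t) * dist p q := by
  have hfst : |p.1 - q.1| ≤ dist p q := le_max_left _ _
  have hsnd : |p.2 - q.2| ≤ dist p q := le_max_right _ _
  have hdiff : idleFlow b p t - idleFlow b q t =
      -((p.1 - q.1 + (p.2 - q.2) * t) * Real.exp (-t)) := by
    unfold idleFlow
    ring
  rw [hdiff, abs_neg, abs_mul, Real.abs_exp]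
  calc _ ≤ (dist p q + dist p q * t) * Real.exp (-t) := by
        gcongr
        refine (abs_add_le _ _).trans ?_
        rw [abs_mul, abs_of_nonneg ht]
        gcongr
    _ = (1 + t) * Real.exp (-t) * dist p q := by ring

lemma abs_idleFlow_sub_limit_le {t : ℝ} (ht : 0 ≤ t) (p : ℝ × ℝ) :
    |idleFlow b p t - b| ≤ (1 + t) * Real.exp (-t) * dist p (-b, 0) := by
  have hrest : idleFlow b (-b, 0) t = b := by simp [idleFlow]
  simpa only [hrest] using abs_idleFlow_sub_le (b := b) ht p (-b, 0)

/- The flow is analytic in time and tends to `b`, so it can meet a level other than `b` only on a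
discrete set of times. -/
lemma ae_idleFlow_ne {c : ℝ} (hc : c ≠ b) (p : ℝ × ℝ) : ∀ᵐ t, idleFlow b p t ≠ c := by
  have hanalytic : AnalyticOnNhd ℝ (fun t => idleFlow b p t - c) univ := by
    intro t _
    unfold idleFlow
    fun_prop
  obtain ⟨t₀, ht₀⟩ : ∃ t, idleFlow b p t ≠ c :=
    ((tendsto_idleFlow b p).eventually (isOpen_ne.mem_nhds hc.symm)).exists
  have hcodiscrete := hanalytic.preimage_zero_mem_codiscrete (x := t₀) (sub_ne_zero.2 ht₀)
  have hae := ae_restrict_le_codiscreteWithin (μ := (volume : Measure ℝ)) MeasurableSet.univ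
    hcodiscrete
  rw [Measure.restrict_univ] at hae
  filter_upwards [hae] with t ht heq
  exact ht (by simp [heq])

lemma ae_idleFlow_notMem (hS : S.Countable) (hb : b ∉ S) (p : ℝ × ℝ) :
    ∀ᵐ t ∂volume.restrict (Ioi 0), idleFlow b p t ∉ S := by
  have hne := (ae_ball_iff hS).2 fun c hc => ae_idleFlow_ne (ne_of_mem_of_not_mem hc hb) p
  refine ae_restrict_of_ae ?_
  filter_upwards [hne] with t ht hmem
  exact ht _ hmem rfl

lemma integrableOn_comp_idleFlow_of_bounded (hψ : Measurable ψ) (hC : ∀ x, |ψ x| ≤ C) (k j : ℕ)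
    (p : ℝ × ℝ) :
    IntegrableOn (fun t => ψ (idleFlow b p t) * (t ^ k * Real.exp (-t) ^ (j + 1))) (Ioi 0) :=
  Integrable.bdd_mul (integrableOn_pow_mul_exp_neg_pow k j)
    (hψ.comp (continuous_idleFlow b p).measurable).aestronglyMeasurable (ae_of_all _ fun _ => hC _)

lemma integrableOn_comp_idleFlow_of_lipschitz (hψ : LipschitzWith K ψ) (hb : ψ b = 0) (k j : ℕ)
    (p : ℝ × ℝ) :
    IntegrableOn (fun t => ψ (idleFlow b p t) * (t ^ k * Real.exp (-t) ^ j)) (Ioi 0) := by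
  have hdom := ((integrableOn_pow_mul_exp_neg_pow k j).add
    (integrableOn_pow_mul_exp_neg_pow (k + 1) j)).const_mul (K * dist p (-b, 0))
  have hmeas := (hψ.continuous.comp (continuous_idleFlow b p)).measurable
  refine Integrable.mono' hdom (hmeas.mul (by fun_prop)).aestronglyMeasurable ?_
  filter_upwards [ae_restrict_mem measurableSet_Ioi] with t ht
  have ht' : 0 ≤ t := le_of_lt ht
  have hle : |ψ (idleFlow b p t)| ≤ K * |idleFlow b p t - b| := by
    simpa [hb, Real.dist_eq] using hψ.dist_le_mul (idleFlow b p t) b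
  rw [Real.norm_eq_abs, abs_mul, abs_of_nonneg (by positivity : 0 ≤ t ^ k * Real.exp (-t) ^ j)]
  calc _ ≤ K * ((1 + t) * Real.exp (-t) * dist p (-b, 0)) * (t ^ k * Real.exp (-t) ^ j) := by
        gcongr
        exact hle.trans (by gcongr; exact abs_idleFlow_sub_limit_le ht' p)
    _ = _ := by simp only [Pi.add_apply]; ring

lemma continuous_flowMoment (hψ : Measurable ψ) (hC : ∀ x, |ψ x| ≤ C) (hS : S.Countable)
    (hb : b ∉ S) (hcont : ∀ x ∉ S, ContinuousAt ψ x) (k j : ℕ) :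
    Continuous (flowMoment b ψ k (j + 1)) := by
  refine continuous_iff_continuousAt.2 fun p => continuousAt_of_dominated
    (bound := fun t => C * (t ^ k * Real.exp (-t) ^ (j + 1))) ?_ ?_ ?_ ?_
  · exact .of_forall fun q => (integrableOn_comp_idleFlow_of_bounded hψ hC k j q).1
  · refine .of_forall fun q => ?_
    filter_upwards [ae_restrict_mem measurableSet_Ioi] with t ht
    have ht' : 0 ≤ t := le_of_lt ht
    rw [Real.norm_eq_abs, abs_mul,
      abs_of_nonneg (by positivity : 0 ≤ t ^ k * Real.exp (-t) ^ (j + 1))]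
    gcongr
    exact hC _
  · exact (integrableOn_pow_mul_exp_neg_pow k j).const_mul C
  · filter_upwards [ae_idleFlow_notMem hS hb p] with t ht
    exact (ContinuousAt.comp (f := fun q => idleFlow b q t) (hcont _ ht)
      (hasFDerivAt_idleFlow b p t).continuousAt).mul continuousAt_const

lemma lipschitzWith_comp_idleFlow_mul (hψ : LipschitzWith K ψ) (k j : ℕ) {t : ℝ} (ht : 0 ≤ t) :
    LipschitzWith
      (Real.nnabs (K * (t ^ k * Real.exp (-t) ^ (j + 1) + t ^ (k + 1) * Real.exp (-t) ^ (j + 1))))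
      (fun q => ψ (idleFlow b q t) * (t ^ k * Real.exp (-t) ^ j)) := by
  refine LipschitzWith.of_dist_le_mul fun p q => ?_
  rw [Real.dist_eq, ← sub_mul, abs_mul,
    abs_of_nonneg (by positivity : 0 ≤ t ^ k * Real.exp (-t) ^ j), Real.coe_nnabs,
    abs_of_nonneg (by positivity :
      0 ≤ K * (t ^ k * Real.exp (-t) ^ (j + 1) + t ^ (k + 1) * Real.exp (-t) ^ (j + 1)))]
  calc _ ≤ K * ((1 + t) * Real.exp (-t) * dist p q) * (t ^ k * Real.exp (-t) ^ j) := by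
        refine mul_le_mul_of_nonneg_right ((hψ.dist_le_mul _ _).trans ?_) (by positivity)
        gcongr
        exact abs_idleFlow_sub_le ht p q
    _ = _ := by ring

lemma hasFDerivAt_flowMoment (hψ : LipschitzWith K ψ) (hψb : ψ b = 0) (hS : S.Countable)
    (hb : b ∉ S) (hdiff : ∀ x ∉ S, DifferentiableAt ℝ ψ x) (k j : ℕ) (p : ℝ × ℝ) :
    HasFDerivAt (flowMoment b ψ k j)
      (-(flowMoment b (deriv ψ) k (j + 1) p • ContinuousLinearMap.fst ℝ ℝ ℝ +
        flowMoment b (deriv ψ) (k + 1) (j + 1) p • ContinuousLinearMap.snd ℝ ℝ ℝ)) p := by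
  have hint (i : ℕ) := integrableOn_comp_idleFlow_of_bounded (b := b) (measurable_deriv ψ)
    (fun x => norm_deriv_le_of_lipschitz hψ) i j p
  have hfst := (hint k).smul_const (ContinuousLinearMap.fst ℝ ℝ ℝ)
  have hsnd := (hint (k + 1)).smul_const (ContinuousLinearMap.snd ℝ ℝ ℝ)
  have hdom : IntegrableOn (fun t : ℝ => (K : ℝ) * (t ^ k * Real.exp (-t) ^ (j + 1) +
      t ^ (k + 1) * Real.exp (-t) ^ (j + 1))) (Ioi 0) :=
    ((integrableOn_pow_mul_exp_neg_pow k j).add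
      (integrableOn_pow_mul_exp_neg_pow (k + 1) j)).const_mul _
  refine (hasFDerivAt_integral_of_dominated_loc_of_lip univ_mem
    (.of_forall fun q => (integrableOn_comp_idleFlow_of_lipschitz hψ hψb k j q).1)
    (integrableOn_comp_idleFlow_of_lipschitz hψ hψb k j p) (hfst.add hsnd).neg.1
    ?_ hdom ?_).2.congr_fderiv ?_
  · filter_upwards [ae_restrict_mem measurableSet_Ioi] with t ht
    exact (lipschitzWith_comp_idleFlow_mul hψ k j (le_of_lt ht)).lipschitzOnWith
  · filter_upwards [ae_idleFlow_notMem hS hb p] with t ht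
    refine (((hdiff _ ht).hasDerivAt.comp_hasFDerivAt p (hasFDerivAt_idleFlow b p t)).mul_const
      (t ^ k * Real.exp (-t) ^ j)).congr_fderiv ?_
    ext <;> simp <;> ring
  · simp only [Pi.neg_apply, Pi.add_apply]
    rw [integral_neg, integral_add hfst hsnd, integral_smul_const, integral_smul_const]
    rfl

lemma hasDerivAt_flowMoment_fst (hψ : LipschitzWith K ψ) (hψb : ψ b = 0) (hS : S.Countable)
    (hb : b ∉ S) (hdiff : ∀ x ∉ S, DifferentiableAt ℝ ψ x) (k j : ℕ) (x₁ x₂ : ℝ) :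
    HasDerivAt (fun t => flowMoment b ψ k j (t, x₂))
      (-flowMoment b (deriv ψ) k (j + 1) (x₁, x₂)) x₁ := by
  have h := (hasFDerivAt_flowMoment hψ hψb hS hb hdiff k j (x₁, x₂)).comp_hasDerivAt x₁
    ((hasDerivAt_id x₁).prodMk (hasDerivAt_const x₁ x₂))
  exact h.congr_deriv (by simp)

lemma hasDerivAt_flowMoment_snd (hψ : LipschitzWith K ψ) (hψb : ψ b = 0) (hS : S.Countable)
    (hb : b ∉ S) (hdiff : ∀ x ∉ S, DifferentiableAt ℝ ψ x) (k j : ℕ) (x₁ x₂ : ℝ) :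
    HasDerivAt (fun t => flowMoment b ψ k j (x₁, t))
      (-flowMoment b (deriv ψ) (k + 1) (j + 1) (x₁, x₂)) x₂ := by
  have h := (hasFDerivAt_flowMoment hψ hψb hS hb hdiff k j (x₁, x₂)).comp_hasDerivAt x₂
    ((hasDerivAt_const x₂ x₁).prodMk (hasDerivAt_id x₂))
  exact h.congr_deriv (by simp)

lemma contDiff_one_flowMoment (hψ : LipschitzWith K ψ) (hψb : ψ b = 0) (hS : S.Countable)
    (hb : b ∉ S) (hdiff : ∀ x ∉ S, ContDiffAt ℝ 1 ψ x) (k j : ℕ) :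
    ContDiff ℝ 1 (flowMoment b ψ k j) := by
  have hcont (i : ℕ) : Continuous (flowMoment b (deriv ψ) i (j + 1)) :=
    continuous_flowMoment (measurable_deriv ψ) (fun x => norm_deriv_le_of_lipschitz hψ) hS hb
      (fun x hx => ((hdiff x hx).derivWithin (m := 0) (by norm_num)).continuousAt) i j
  exact contDiff_one_iff_hasFDerivAt.2 ⟨_, by fun_prop, hasFDerivAt_flowMoment hψ hψb hS hb
    (fun x hx => (hdiff x hx).differentiableAt one_ne_zero) k j⟩

lemma contDiff_two_flowMoment {K' : ℝ≥0} (hψ : LipschitzWith K ψ) (hψb : ψ b = 0)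
    (hdiff : Differentiable ℝ ψ) (hψ' : LipschitzWith K' (deriv ψ)) (hψ'b : deriv ψ b = 0)
    (hS : S.Countable) (hb : b ∉ S) (hdiff' : ∀ x ∉ S, ContDiffAt ℝ 1 (deriv ψ) x) (k j : ℕ) :
    ContDiff ℝ 2 (flowMoment b ψ k j) := by
  have hk := contDiff_one_flowMoment hψ' hψ'b hS hb hdiff' k (j + 1)
  have hk' := contDiff_one_flowMoment hψ' hψ'b hS hb hdiff' (k + 1) (j + 1)
  exact (contDiff_succ_iff_hasFDerivAt (n := 1)).2 ⟨_, by fun_prop,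
    hasFDerivAt_flowMoment hψ hψb countable_empty (notMem_empty b) (fun x _ => hdiff x) k j⟩

/- Integrate the derivative of `t ↦ ψ (idleFlow b p t)` over `t > 0`. -/
lemma flowMoment_poisson (hψ : LipschitzWith K ψ) (hdiff : Differentiable ℝ ψ) (hψb : ψ b = 0)
    (p : ℝ × ℝ) :
    (-p.1 + p.2 - b) * -flowMoment b (deriv ψ) 0 1 p -
      p.2 * -flowMoment b (deriv ψ) 1 1 p = -ψ (-p.1) := by
  have hint (i : ℕ) := integrableOn_comp_idleFlow_of_bounded (b := b) (measurable_deriv ψ)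
    (fun x => norm_deriv_le_of_lipschitz hψ) i 0 p
  have hleft := (hint 0).const_mul (p.1 + b - p.2)
  have hright := (hint 1).const_mul p.2
  have hderiv (t : ℝ) : HasDerivAt (fun t => ψ (idleFlow b p t))
      ((p.1 + b - p.2) * (deriv ψ (idleFlow b p t) * (t ^ 0 * Real.exp (-t) ^ (0 + 1))) +
        p.2 * (deriv ψ (idleFlow b p t) * (t ^ 1 * Real.exp (-t) ^ (0 + 1)))) t := by
    refine ((hdiff (idleFlow b p t)).hasDerivAt.comp t (hasDerivAt_idleFlow b p t)).congr_deriv ?_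
    ring
  have hFTC := integral_Ioi_of_hasDerivAt_of_tendsto' (fun t _ => hderiv t) (hleft.add hright)
    ((hdiff b).continuousAt.tendsto.comp (tendsto_idleFlow b p))
  rw [integral_add hleft hright, integral_const_mul, integral_const_mul, idleFlow_zero,
    hψb] at hFTC
  simp only [flowMoment]
  linarith

lemma flowMoment_boundary_eq_zero (hb : 0 ≤ b) (hψ : ∀ x ≤ b, ψ x = 0) (k j : ℕ) {x₂ : ℝ}
    (hx₂ : 0 ≤ x₂) : flowMoment b ψ k j (0, x₂) = 0 := by
  refine setIntegral_eq_zero_of_forall_eq_zero fun t ht => ?_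
  have ht' : 0 ≤ t := le_of_lt ht
  have hle : idleFlow b (0, x₂) t ≤ b := sub_le_self _ (by positivity)
  rw [hψ _ hle, zero_mul]

lemma sub_le_log_of_idleFlow (hbl : b < l) {p : ℝ × ℝ} (hp : 0 ≤ p.2) {s t : ℝ} (hst : s ≤ t)
    (hs : idleFlow b p s ≤ u) (ht : l ≤ idleFlow b p t) :
    t - s ≤ Real.log ((u - b) / (l - b)) := by
  have hlb : 0 < l - b := sub_pos.2 hbl
  have hexp : Real.exp (t - s) * Real.exp (-t) = Real.exp (-s) := by
    rw [← Real.exp_add, show t - s + -t = -s by ring]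
  have key : Real.exp (t - s) * (l - b) ≤ u - b :=
    calc Real.exp (t - s) * (l - b) ≤ Real.exp (t - s) * (idleFlow b p t - b) := by gcongr
      _ = -(p.1 + b + p.2 * t) * Real.exp (-s) := by rw [← hexp, idleFlow]; ring
      _ ≤ -(p.1 + b + p.2 * s) * Real.exp (-s) := by gcongr
      _ = idleFlow b p s - b := by rw [idleFlow]; ring
      _ ≤ u - b := by linarith
  have hub : 0 < u - b := (mul_pos (Real.exp_pos _) hlb).trans_le key
  rwa [Real.le_log_iff_exp_le (div_pos hub hlb), le_div_iff₀ hlb]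

lemma volume_idleFlow_preimage_Icc_le (hbl : b < l) {p : ℝ × ℝ} (hp : 0 ≤ p.2) :
    volume (idleFlow b p ⁻¹' Icc l u) ≤ ENNReal.ofReal (Real.log ((u - b) / (l - b))) := by
  refine (Real.volume_le_diam _).trans (Metric.ediam_le fun s hs t ht => ?_)
  rw [edist_dist, Real.dist_eq]
  refine ENNReal.ofReal_le_ofReal ?_
  rcases le_total s t with hst | hts
  · rw [abs_sub_comm, abs_of_nonneg (sub_nonneg.2 hst)]
    exact sub_le_log_of_idleFlow hbl hp hst hs.2 ht.1
  · rw [abs_of_nonneg (sub_nonneg.2 hts)]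
    exact sub_le_log_of_idleFlow hbl hp hts ht.2 hs.1

lemma abs_flowMoment_le (hbl : b < l) (hlu : l ≤ u) (hC : ∀ x, |ψ x| ≤ C) {p : ℝ × ℝ}
    (hp : 0 ≤ p.2) (hzero : ∀ t, 0 < t → idleFlow b p t ∉ Icc l u → ψ (idleFlow b p t) = 0)
    (j : ℕ) : |flowMoment b ψ 0 j p| ≤ C * Real.log ((u - b) / (l - b)) := by
  have hC₀ : 0 ≤ C := (abs_nonneg _).trans (hC 0)
  have hlog : 0 ≤ Real.log ((u - b) / (l - b)) :=
    Real.log_nonneg ((one_le_div (sub_pos.2 hbl)).2 (by linarith))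
  set T : Set ℝ := Ioi 0 ∩ idleFlow b p ⁻¹' Icc l u
  have hvol : volume T ≤ ENNReal.ofReal (Real.log ((u - b) / (l - b))) :=
    (measure_mono inter_subset_right).trans (volume_idleFlow_preimage_Icc_le hbl hp)
  have hrestrict : flowMoment b ψ 0 j p =
      ∫ t in T, ψ (idleFlow b p t) * (t ^ 0 * Real.exp (-t) ^ j) := by
    refine setIntegral_eq_of_subset_of_forall_sdiff_eq_zero measurableSet_Ioi
      inter_subset_left fun t ht => ?_
    rw [hzero t ht.1 fun hmem => ht.2 ⟨ht.1, hmem⟩, zero_mul]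
  have hbound (t : ℝ) (ht : t ∈ T) :
      ‖ψ (idleFlow b p t) * (t ^ 0 * Real.exp (-t) ^ j)‖ ≤ C := by
    have hexp : Real.exp (-t) ≤ 1 := Real.exp_le_one_iff.2 (neg_nonpos.2 (le_of_lt ht.1))
    rw [pow_zero, one_mul, norm_mul, Real.norm_of_nonneg (pow_nonneg (Real.exp_pos _).le j)]
    exact (mul_le_mul (hC _) (pow_le_one₀ (Real.exp_pos _).le hexp) (by positivity) hC₀).trans_eq
      (mul_one C)
  rw [hrestrict]
  refine (norm_setIntegral_le_of_norm_le_const (hvol.trans_lt ENNReal.ofReal_lt_top)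
    hbound).trans ?_
  gcongr
  exact ENNReal.toReal_le_of_le_ofReal hlog hvol

lemma idleFlow_le {p : ℝ × ℝ} (hbu : b ≤ u) (hp₁ : -u ≤ p.1) (hp₂ : 0 ≤ p.2) {t : ℝ}
    (ht : 0 ≤ t) : idleFlow b p t ≤ u := by
  have hexp : Real.exp (-t) ≤ 1 := Real.exp_le_one_iff.2 (neg_nonpos.2 ht)
  calc idleFlow b p t = b - (p.1 + b + p.2 * t) * Real.exp (-t) := rfl
    _ ≤ b - (b - u) * Real.exp (-t) := by gcongr; linarith [mul_nonneg hp₂ ht]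
    _ ≤ u := by nlinarith

theorem isPoissonSolution_flowMoment {K' : ℝ≥0} (hb : 0 ≤ b) (hψ : LipschitzWith K ψ)
    (hdiff : Differentiable ℝ ψ) (hzero : EqOn ψ (fun _ => 0) (Iic b))
    (hψ' : LipschitzWith K' (deriv ψ)) (hS : S.Countable) (hbS : b ∉ S)
    (hdiff' : ∀ x ∉ S, ContDiffAt ℝ 1 (deriv ψ) x) :
    IsPoissonSolution b (fun x₁ _ => ψ (-x₁)) (fun x₁ x₂ => flowMoment b ψ 0 0 (x₁, x₂))
      (fun x₁ x₂ => -flowMoment b (deriv ψ) 0 1 (x₁, x₂))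
      (fun x₁ x₂ => -flowMoment b (deriv ψ) 1 1 (x₁, x₂))
      (fun x₁ x₂ => flowMoment b (deriv (deriv ψ)) 0 2 (x₁, x₂)) := by
  have hψb : ψ b = 0 := hzero self_mem_Iic
  have hzero' (x : ℝ) (hx : x ≤ b) : deriv ψ x = 0 := deriv_eq_zero_of_eqOn_Iic (hdiff x) hzero hx
  have hψ'b : deriv ψ b = 0 := hzero' b le_rfl
  exact
    { contDiffOn :=
        (contDiff_two_flowMoment hψ hψb hdiff hψ' hψ'b hS hbS hdiff' 0 0).contDiffOn
      hasDerivWithinAt_fst := fun x₁ _ x₂ _ =>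
        (hasDerivAt_flowMoment_fst hψ hψb countable_empty (notMem_empty b) (fun x _ => hdiff x)
          0 0 x₁ x₂).hasDerivWithinAt
      hasDerivWithinAt_snd := fun x₁ _ x₂ _ =>
        (hasDerivAt_flowMoment_snd hψ hψb countable_empty (notMem_empty b) (fun x _ => hdiff x)
          0 0 x₁ x₂).hasDerivWithinAt
      hasDerivWithinAt_fst_fst := fun x₁ _ x₂ _ =>
        (hasDerivAt_flowMoment_fst hψ' hψ'b hS hbS
          (fun x hx => (hdiff' x hx).differentiableAt one_ne_zero)
          0 1 x₁ x₂).neg.hasDerivWithinAt.congr_deriv (neg_neg _)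
      poisson := fun x₁ _ x₂ _ => flowMoment_poisson hψ hdiff hψb (x₁, x₂)
      boundary := fun x₂ hx₂ => by
        simp only [flowMoment_boundary_eq_zero hb hzero' _ _ hx₂] }

end IdleFlow

section FirstSolution

variable {b l u : ℝ}

lemma flowMoment_phiSm_le (hbl : b < l) (hlu : l < u) {p : ℝ × ℝ} (hp₁ : -u ≤ p.1)
    (hp₂ : 0 ≤ p.2) :
    flowMoment b (phiSm l u) 0 0 p ≤ Real.log ((u - b) / (l - b)) := by
  have hbound : ∀ x, |phiSm l u x| ≤ 1 := fun x =>
    abs_le.2 ⟨by linarith [(phiSm_mem_Icc hlu x).1], (phiSm_mem_Icc hlu x).2⟩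
  refine (le_abs_self _).trans ((abs_flowMoment_le hbl hlu.le hbound hp₂ ?_ 0).trans_eq
    (one_mul _))
  exact fun t ht hmem => phiSm_of_le (le_of_not_ge fun hl =>
    hmem ⟨hl, idleFlow_le (hbl.trans hlu).le hp₁ hp₂ ht.le⟩)

lemma deriv_phiSm_eq_zero {x : ℝ} (hlu : l < u) (hx : x ∉ Icc l u) : deriv (phiSm l u) x = 0 :=
  deriv_eq_zero_of_notMem_Icc (fun _ hy => phiSm_of_le (le_of_lt hy))
    (fun _ hy => phiSm_of_ge hlu (le_of_lt hy)) hx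

lemma deriv_deriv_phiSm_eq_zero {x : ℝ} (hlu : l < u) (hx : x ∉ Icc l u) :
    deriv (deriv (phiSm l u)) x = 0 :=
  deriv_eq_zero_of_notMem_Icc
    (fun _ hy => deriv_phiSm_eq_zero hlu fun hmem => hmem.1.not_gt hy)
    (fun _ hy => deriv_phiSm_eq_zero hlu fun hmem => hmem.2.not_gt hy) hx

theorem exists_isPoissonSolution_phiSm_neg_fst (hb : 0 ≤ b) (hbl : b < l) (hlu : l < u) :
    ∃ f f₁ f₂ f₁₁ : ℝ → ℝ → ℝ, IsPoissonSolution b (fun x₁ _ => phiSm l u (-x₁)) f f₁ f₂ f₁₁ ∧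
      (∀ x₁ x₂, -u ≤ x₁ → 0 ≤ x₂ → f x₁ x₂ ≤ Real.log ((u - b) / (l - b))) ∧
      ∀ x₁ x₂, 0 ≤ x₂ → |f₁ x₁ x₂| ≤ 4 / (u - l) * Real.log ((u - b) / (l - b)) ∧
        |f₁₁ x₁ x₂| ≤ 12 / (u - l) ^ 2 * Real.log ((u - b) / (l - b)) := by
  have hknots : b ∉ ({l, (u + l) / 2, u} : Set ℝ) := by
    simp only [mem_insert_iff, mem_singleton_iff, not_or]
    refine ⟨?_, ?_, ?_⟩ <;> linarith
  have hderiv (x : ℝ) : |deriv (deriv (phiSm l u)) x| ≤ 12 / (u - l) ^ 2 :=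
    (norm_deriv_le_of_lipschitz (lipschitzWith_deriv_phiSm hlu)).trans_eq
      (Real.coe_toNNReal _ (by positivity))
  refine ⟨_, _, _, _, isPoissonSolution_flowMoment hb (lipschitzWith_phiSm hlu)
    ((contDiff_phiSm hlu).differentiable one_ne_zero)
    (fun x hx => phiSm_of_le (le_trans hx hbl.le)) (lipschitzWith_deriv_phiSm hlu)
    (Set.toFinite _).countable hknots (fun x hx => contDiffAt_deriv_phiSm hlu hx),
    fun x₁ x₂ hx₁ hx₂ => flowMoment_phiSm_le hbl hlu hx₁ hx₂, fun x₁ x₂ hx₂ => ⟨?_, ?_⟩⟩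
  · rw [abs_neg]
    exact abs_flowMoment_le hbl hlu.le (abs_deriv_phiSm_le hlu) hx₂
      (fun t _ ht => deriv_phiSm_eq_zero hlu ht) 1
  · exact abs_flowMoment_le hbl hlu.le hderiv hx₂
      (fun t _ ht => deriv_deriv_phiSm_eq_zero hlu ht) 2

end FirstSolution

section SecondSolution

variable {a b l u x₁ x₂ q : ℝ} {k φ : ℝ → ℝ}

lemma hasDerivAt_integral_right (hk : Continuous k) (a x : ℝ) :
    HasDerivAt (fun y => ∫ r in a..y, k r) (k x) x :=
  (hk.integral_hasStrictDerivAt a x).hasDerivAt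

lemma contDiff_two_integral_right (hk : ContDiff ℝ 1 k) (a : ℝ) :
    ContDiff ℝ 2 (fun y => ∫ r in a..y, k r) := by
  have hderiv := hasDerivAt_integral_right hk.continuous a
  refine (contDiff_succ_iff_deriv (n := 1)).2 ⟨fun x => (hderiv x).differentiableAt, by simp, ?_⟩
  rwa [funext fun x => (hderiv x).deriv]

lemma integral_right_eq_zero (hk : EqOn k (fun _ => 0) (Iic a)) {x : ℝ} (hx : x ≤ a) :
    ∫ r in a..x, k r = 0 := by
  refine (intervalIntegral.integral_congr fun r hr => hk ?_).trans intervalIntegral.integral_zero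
  exact (uIcc_of_ge hx ▸ hr).2

lemma contDiff_div_id (hl : 0 < l) (hφ : ContDiff ℝ 1 φ) (hzero : EqOn φ (fun _ => 0) (Iic l)) :
    ContDiff ℝ 1 (fun r => φ r / r) := by
  refine contDiff_iff_contDiffAt.2 fun r => ?_
  rcases lt_or_ge r l with h | h
  · refine (contDiffAt_const (c := (0 : ℝ))).congr_of_eventuallyEq ?_
    filter_upwards [Iio_mem_nhds h] with y hy
    rw [hzero (mem_Iic.2 (le_of_lt hy)), zero_div]
  · exact hφ.contDiffAt.div contDiffAt_id (hl.trans_le h).ne'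

/-- The first integral `(x₁ + b) / x₂ + log x₂` of the system `v₁' = -v₁ + v₂ - b`, `v₂' = -v₂`: its
level sets are the characteristics of the Poisson equation. -/
noncomputable def charInvariant (b x₁ x₂ : ℝ) : ℝ := (x₁ + b) / x₂ + Real.log x₂

lemma hasDerivAt_charInvariant_fst (b x₁ x₂ : ℝ) :
    HasDerivAt (fun t => charInvariant b t x₂) (1 / x₂) x₁ :=
  (((hasDerivAt_id x₁).add_const b).div_const x₂).add_const _

lemma hasDerivAt_charInvariant_snd (b x₁ : ℝ) (hx₂ : x₂ ≠ 0) :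
    HasDerivAt (fun t => charInvariant b x₁ t) ((x₂ - x₁ - b) / x₂ ^ 2) x₂ := by
  refine (((hasDerivAt_const x₂ (x₁ + b)).div (hasDerivAt_id x₂) hx₂).add
    (Real.hasDerivAt_log hx₂)).congr_deriv ?_
  simp only [id]
  field_simp
  ring

lemma monotoneOn_charInvariant_zero (hb : 0 < b) : MonotoneOn (charInvariant b 0) (Ici b) := by
  have hderiv (x : ℝ) (hx : x ∈ Ici b) :=
    hasDerivAt_charInvariant_snd b 0 (hb.trans_le hx).ne'
  refine monotoneOn_of_deriv_nonneg (convex_Ici b)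
    (fun x hx => (hderiv x hx).continuousAt.continuousWithinAt)
    (fun x hx => (hderiv x (interior_subset hx)).differentiableAt.differentiableWithinAt)
    fun x hx => ?_
  rw [(hderiv x (interior_subset hx)).deriv, sub_zero]
  exact div_nonneg (sub_nonneg.2 (interior_subset hx)) (sq_nonneg x)

lemma charInvariant_le_of_nonpos (hb : 0 < b) (hx₁ : x₁ ≤ 0) (hx₂ : b ≤ x₂) {y : ℝ}
    (hy : x₂ ≤ y) : charInvariant b x₁ x₂ ≤ charInvariant b 0 y := by
  refine le_trans ?_ (monotoneOn_charInvariant_zero hb hx₂ (le_trans hx₂ hy) hy)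
  have : 0 < x₂ := hb.trans_le hx₂
  unfold charInvariant
  gcongr

/-- The derivative of `charInvariant b 0`, frozen below `l` at its value there so as to be positive
on the whole line. -/
noncomputable def exitLevelDeriv (b l w : ℝ) : ℝ := (max w l - b) / max w l ^ 2

/-- The invariant of the characteristic that reaches the boundary `x₁ = 0` at height `w`, for
`w ≥ l`, continued affinely below `l` to an increasing bijection of the line. -/
noncomputable def exitLevel (b l w : ℝ) : ℝ :=
  charInvariant b 0 l + ∫ r in l..w, exitLevelDeriv b l r

/-- The height at which the characteristic with invariant `q` reaches the boundary `x₁ = 0`, if it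
does so above `l`. -/
noncomputable def exitHeight (b l : ℝ) : ℝ → ℝ := Function.invFun (exitLevel b l)

lemma exitLevelDeriv_pos (hb : 0 < b) (hbl : b < l) (w : ℝ) : 0 < exitLevelDeriv b l w := by
  have hmax : l ≤ max w l := le_max_right _ _
  exact div_pos (by linarith) (pow_pos (by linarith) 2)

lemma continuous_exitLevelDeriv (hb : 0 < b) (hbl : b < l) : Continuous (exitLevelDeriv b l) := by
  have hmax (w : ℝ) : 0 < max w l := (hb.trans hbl).trans_le (le_max_right w l)
  unfold exitLevelDeriv
  exact Continuous.div (by fun_prop) (by fun_prop) fun w => (pow_pos (hmax w) 2).ne'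

lemma hasDerivAt_exitLevel (hb : 0 < b) (hbl : b < l) (w : ℝ) :
    HasDerivAt (exitLevel b l) (exitLevelDeriv b l w) w :=
  (hasDerivAt_integral_right (continuous_exitLevelDeriv hb hbl) l w).const_add _

lemma strictMono_exitLevel (hb : 0 < b) (hbl : b < l) : StrictMono (exitLevel b l) :=
  strictMono_of_hasDerivAt_pos (hasDerivAt_exitLevel hb hbl) (exitLevelDeriv_pos hb hbl)

lemma exitLevel_eq_charInvariant (hb : 0 < b) (hbl : b < l) {w : ℝ} (hw : l ≤ w) :
    exitLevel b l w = charInvariant b 0 w := by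
  have hFTC : ∫ r in l..w, exitLevelDeriv b l r = charInvariant b 0 w - charInvariant b 0 l := by
    refine intervalIntegral.integral_eq_sub_of_hasDerivAt (fun r hr => ?_)
      ((continuous_exitLevelDeriv hb hbl).intervalIntegrable _ _)
    have hlr : l ≤ r := (uIcc_of_le hw ▸ hr).1
    rw [exitLevelDeriv, max_eq_left hlr]
    simpa using hasDerivAt_charInvariant_snd b 0 ((hb.trans hbl).trans_le hlr).ne'
  rw [exitLevel, hFTC, add_sub_cancel]

lemma exitLevel_of_le {w : ℝ} (hw : w ≤ l) :
    exitLevel b l w = charInvariant b 0 l + (w - l) * exitLevelDeriv b l l := by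
  have hconst : ∫ r in l..w, exitLevelDeriv b l r = ∫ _ in l..w, exitLevelDeriv b l l := by
    refine intervalIntegral.integral_congr fun r hr => ?_
    simp only [exitLevelDeriv, max_eq_right (uIcc_of_ge hw ▸ hr).2, max_self]
  rw [exitLevel, hconst, intervalIntegral.integral_const, smul_eq_mul]

lemma surjective_exitLevel (hb : 0 < b) (hbl : b < l) : Function.Surjective (exitLevel b l) := by
  have hcont : Continuous (exitLevel b l) :=
    continuous_iff_continuousAt.2 fun w => (hasDerivAt_exitLevel hb hbl w).continuousAt
  refine hcont.surjective ?_ ?_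
  · refine tendsto_atTop_mono' _ ?_ Real.tendsto_log_atTop
    filter_upwards [eventually_ge_atTop l] with w hw
    rw [exitLevel_eq_charInvariant hb hbl hw, charInvariant, zero_add]
    exact le_add_of_nonneg_left (div_nonneg hb.le ((hb.trans hbl).le.trans hw))
  · have hlin : Tendsto (fun w => charInvariant b 0 l + (w - l) * exitLevelDeriv b l l)
        atBot atBot :=
      tendsto_atBot_add_const_left _ _
        ((tendsto_atBot_add_const_right _ (-l) tendsto_id).atBot_mul_const
          (exitLevelDeriv_pos hb hbl l))
    refine hlin.congr' ?_
    filter_upwards [eventually_le_atBot l] with w hw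
    exact (exitLevel_of_le hw).symm

lemma exitHeight_exitLevel (hb : 0 < b) (hbl : b < l) (w : ℝ) :
    exitHeight b l (exitLevel b l w) = w :=
  Function.leftInverse_invFun (strictMono_exitLevel hb hbl).injective w

lemma exitLevel_exitHeight (hb : 0 < b) (hbl : b < l) (q : ℝ) :
    exitLevel b l (exitHeight b l q) = q :=
  Function.rightInverse_invFun (surjective_exitLevel hb hbl) q

lemma monotone_exitHeight (hb : 0 < b) (hbl : b < l) : Monotone (exitHeight b l) :=
  fun q r hqr => by
    rwa [← (strictMono_exitLevel hb hbl).le_iff_le, exitLevel_exitHeight hb hbl,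
      exitLevel_exitHeight hb hbl]

lemma continuous_exitHeight (hb : 0 < b) (hbl : b < l) : Continuous (exitHeight b l) :=
  (monotone_exitHeight hb hbl).continuous_of_surjective fun w => ⟨_, exitHeight_exitLevel hb hbl w⟩

lemma hasDerivAt_exitHeight (hb : 0 < b) (hbl : b < l) (q : ℝ) :
    HasDerivAt (exitHeight b l) (exitLevelDeriv b l (exitHeight b l q))⁻¹ q :=
  .of_local_left_inverse (continuous_exitHeight hb hbl).continuousAt
    (hasDerivAt_exitLevel hb hbl _) (exitLevelDeriv_pos hb hbl _).ne'
    (.of_forall (exitLevel_exitHeight hb hbl))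

lemma contDiff_exitHeight (hb : 0 < b) (hbl : b < l) : ContDiff ℝ 1 (exitHeight b l) := by
  have hderiv := hasDerivAt_exitHeight hb hbl
  refine contDiff_one_iff_deriv.2 ⟨fun q => (hderiv q).differentiableAt, ?_⟩
  rw [funext fun q => (hderiv q).deriv]
  exact ((continuous_exitLevelDeriv hb hbl).comp (continuous_exitHeight hb hbl)).inv₀
    fun q => (exitLevelDeriv_pos hb hbl _).ne'

lemma exitHeight_charInvariant_le (hb : 0 < b) (hbl : b < l) (hx₁ : x₁ ≤ 0) (hx₂ : b ≤ x₂)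
    {y : ℝ} (hly : l ≤ y) (hy : x₂ ≤ y) : exitHeight b l (charInvariant b x₁ x₂) ≤ y := by
  rw [← exitHeight_exitLevel hb hbl y, exitLevel_eq_charInvariant hb hbl hly]
  exact monotone_exitHeight hb hbl (charInvariant_le_of_nonpos hb hx₁ hx₂ hy)

/-- The derivative, with respect to the invariant `q` of a characteristic, of the cost `φ`
accumulated along it: the density that turns the boundary condition into a function of `q`. -/
noncomputable def exitRate (b l : ℝ) (φ : ℝ → ℝ) (q : ℝ) : ℝ :=
  φ (exitHeight b l q) * exitHeight b l q / b

lemma contDiff_exitRate (hb : 0 < b) (hbl : b < l) (hφ : ContDiff ℝ 1 φ) :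
    ContDiff ℝ 1 (exitRate b l φ) :=
  ((hφ.comp (contDiff_exitHeight hb hbl)).mul (contDiff_exitHeight hb hbl)).div_const b

lemma deriv_exitRate (hb : 0 < b) (hbl : b < l) (hφ : Differentiable ℝ φ) (q : ℝ) :
    deriv (exitRate b l φ) q =
      (deriv φ (exitHeight b l q) * exitHeight b l q + φ (exitHeight b l q)) / b *
        (exitLevelDeriv b l (exitHeight b l q))⁻¹ := by
  have hW := hasDerivAt_exitHeight hb hbl q
  refine ((((hφ _).hasDerivAt.comp q hW).mul hW).div_const b).deriv.trans ?_
  simp only [Function.comp_apply]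
  ring

lemma exitRate_eq_zero_of_exitHeight_le (hzero : EqOn φ (fun _ => 0) (Iic l))
    (hq : exitHeight b l q ≤ l) : exitRate b l φ q = 0 := by
  rw [exitRate, hzero hq, zero_mul, zero_div]

lemma exitRate_eq_zero (hb : 0 < b) (hbl : b < l) (hzero : EqOn φ (fun _ => 0) (Iic l)) :
    EqOn (exitRate b l φ) (fun _ => 0) (Iic (exitLevel b l l)) := fun _ hq =>
  exitRate_eq_zero_of_exitHeight_le hzero
    ((monotone_exitHeight hb hbl hq).trans_eq (exitHeight_exitLevel hb hbl l))

lemma exitRate_nonneg (hb : 0 < b) (hbl : b < l) (hzero : EqOn φ (fun _ => 0) (Iic l))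
    (hnonneg : ∀ x, 0 ≤ φ x) (q : ℝ) : 0 ≤ exitRate b l φ q := by
  rcases le_total (exitHeight b l q) l with hq | hq
  · rw [exitRate_eq_zero_of_exitHeight_le hzero hq]
  · exact div_nonneg (mul_nonneg (hnonneg _) ((hb.trans hbl).le.trans hq)) hb.le

lemma abs_exitRate_le (hb : 0 < b) (hbl : b < l) (hφ : ∀ x, |φ x| ≤ 1)
    (hq : l ≤ exitHeight b l q) : |exitRate b l φ q| ≤ exitHeight b l q / b := by
  have hW : 0 < exitHeight b l q := (hb.trans hbl).trans_le hq
  rw [exitRate, abs_div, abs_mul, abs_of_pos hb, abs_of_pos hW]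
  gcongr
  exact mul_le_of_le_one_left hW.le (hφ _)

lemma abs_deriv_exitRate_le (hb : 0 < b) (hbl : b < l) (hdiff : Differentiable ℝ φ)
    (hφ : ∀ x, |φ x| ≤ 1) {K : ℝ} (hφ' : ∀ x, |deriv φ x| ≤ K) (hq : l ≤ exitHeight b l q) :
    |deriv (exitRate b l φ) q| ≤ 1 / (b * (l - b)) * (1 + K * l) * exitHeight b l q ^ 2 := by
  have hK : 0 ≤ K := (abs_nonneg _).trans (hφ' 0)
  rw [deriv_exitRate hb hbl hdiff, exitLevelDeriv, max_eq_left hq]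
  set w := exitHeight b l q
  have hw : 0 < w := (hb.trans hbl).trans_le hq
  have hwb : 0 < w - b := by linarith
  have hlb : 0 < l - b := by linarith
  have hnum : |deriv φ w * w + φ w| ≤ 1 + K * w := by
    refine (abs_add_le _ _).trans ((add_comm _ _).trans_le (add_le_add (hφ w) ?_))
    rw [abs_mul, abs_of_pos hw]
    exact mul_le_mul_of_nonneg_right (hφ' w) hw.le
  have hdecr : (1 + K * w) / (w - b) ≤ (1 + K * l) / (l - b) := by
    rw [div_le_div_iff₀ hwb hlb]
    nlinarith [mul_nonneg hK (mul_nonneg hb.le (sub_nonneg.2 hq))]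
  rw [abs_mul, abs_div, abs_of_pos hb, abs_of_pos (by positivity : 0 < ((w - b) / w ^ 2)⁻¹)]
  calc _ ≤ (1 + K * w) / b * ((w - b) / w ^ 2)⁻¹ := by gcongr
    _ = (1 + K * w) / (w - b) * (w ^ 2 / b) := by field_simp
    _ ≤ (1 + K * l) / (l - b) * (w ^ 2 / b) := by gcongr
    _ = _ := by field_simp

/-- The solution of the Poisson equation with right-hand side `-φ x₂`, for `φ` vanishing below `l`:
the cost accumulated down to height `l` along the characteristic through `(x₁, x₂)`, plus a function
of its invariant that is determined by the boundary condition. -/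
noncomputable def exitSolution (b l : ℝ) (φ : ℝ → ℝ) (x₁ x₂ : ℝ) : ℝ :=
  if x₂ ≤ l then 0 else
    (∫ r in l..x₂, φ r / r) + ∫ q in exitLevel b l l..charInvariant b x₁ x₂, exitRate b l φ q

/-- The partial derivative of `exitSolution` in `x₁`. -/
noncomputable def exitSolutionFst (b l : ℝ) (φ : ℝ → ℝ) (x₁ x₂ : ℝ) : ℝ :=
  if x₂ ≤ l then 0 else exitRate b l φ (charInvariant b x₁ x₂) * (1 / x₂)

/-- The partial derivative of `exitSolution` in `x₂`. -/
noncomputable def exitSolutionSnd (b l : ℝ) (φ : ℝ → ℝ) (x₁ x₂ : ℝ) : ℝ :=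
  if x₂ ≤ l then 0 else
    φ x₂ / x₂ + exitRate b l φ (charInvariant b x₁ x₂) * ((x₂ - x₁ - b) / x₂ ^ 2)

/-- The second partial derivative of `exitSolution` in `x₁`. -/
noncomputable def exitSolutionFstFst (b l : ℝ) (φ : ℝ → ℝ) (x₁ x₂ : ℝ) : ℝ :=
  if x₂ ≤ l then 0 else deriv (exitRate b l φ) (charInvariant b x₁ x₂) * (1 / x₂) * (1 / x₂)

lemma charInvariant_le_exitLevel (hb : 0 < b) (hbl : b < l) (hx₁ : x₁ ≤ 0) (hx₂ : b ≤ x₂)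
    (hx₂l : x₂ ≤ l) : charInvariant b x₁ x₂ ≤ exitLevel b l l :=
  (charInvariant_le_of_nonpos hb hx₁ hx₂ hx₂l).trans_eq
    (exitLevel_eq_charInvariant hb hbl le_rfl).symm

lemma exitSolution_eq (hb : 0 < b) (hbl : b < l) (hzero : EqOn φ (fun _ => 0) (Iic l))
    (hx₁ : x₁ ≤ 0) (hx₂ : b ≤ x₂) :
    exitSolution b l φ x₁ x₂ =
      (∫ r in l..x₂, φ r / r) +
        ∫ q in exitLevel b l l..charInvariant b x₁ x₂, exitRate b l φ q := by
  unfold exitSolution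
  split_ifs with h
  · have hdiv : EqOn (fun r => φ r / r) (fun _ => 0) (Iic l) := fun r hr => by
      simp only [hzero hr, zero_div]
    rw [integral_right_eq_zero hdiv h, integral_right_eq_zero (exitRate_eq_zero hb hbl hzero)
      (charInvariant_le_exitLevel hb hbl hx₁ hx₂ h), add_zero]
  · rfl

lemma exitSolutionSnd_eq (hb : 0 < b) (hbl : b < l) (hzero : EqOn φ (fun _ => 0) (Iic l))
    (hx₁ : x₁ ≤ 0) (hx₂ : b ≤ x₂) :
    exitSolutionSnd b l φ x₁ x₂ =
      φ x₂ / x₂ + exitRate b l φ (charInvariant b x₁ x₂) * ((x₂ - x₁ - b) / x₂ ^ 2) := by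
  unfold exitSolutionSnd
  split_ifs with h
  · rw [hzero h, zero_div, exitRate_eq_zero hb hbl hzero
      (charInvariant_le_exitLevel hb hbl hx₁ hx₂ h), zero_mul, add_zero]
  · rfl

lemma contDiffOn_exitSolution (hb : 0 < b) (hbl : b < l) (hφ : ContDiff ℝ 1 φ)
    (hzero : EqOn φ (fun _ => 0) (Iic l)) :
    ContDiffOn ℝ 2 (fun p : ℝ × ℝ => exitSolution b l φ p.1 p.2) (Iic 0 ×ˢ Ici 0) := by
  rintro ⟨x₁, x₂⟩ ⟨hx₁ : x₁ ≤ 0, -⟩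
  rcases lt_or_ge x₂ l with h | h
  · refine (contDiffAt_const (c := (0 : ℝ))).congr_of_eventuallyEq ?_ |>.contDiffWithinAt
    filter_upwards [continuous_snd.continuousAt.eventually_lt continuousAt_const h] with p hp
    exact if_pos hp.le
  · have hbx₂ : b < x₂ := hbl.trans_le h
    have hx₂ : x₂ ≠ 0 := (hb.trans hbx₂).ne'
    have hinv : ContDiffAt ℝ 2 (fun p : ℝ × ℝ => charInvariant b p.1 p.2) (x₁, x₂) :=
      ((contDiffAt_fst.add contDiffAt_const).div contDiffAt_snd hx₂).add (contDiffAt_snd.log hx₂)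
    have hcost := contDiff_two_integral_right (contDiff_div_id (hb.trans hbl) hφ hzero) l
    have hrate := contDiff_two_integral_right (contDiff_exitRate hb hbl hφ) (exitLevel b l l)
    refine ((hcost.contDiffAt.comp (x₁, x₂) contDiffAt_snd).add
      (hrate.contDiffAt.comp (x₁, x₂) hinv)).contDiffWithinAt.congr_of_eventuallyEq ?_
      (exitSolution_eq hb hbl hzero hx₁ hbx₂.le)
    have hnear : ∀ᶠ p : ℝ × ℝ in 𝓝 (x₁, x₂), b < p.2 :=
      continuousAt_const.eventually_lt continuous_snd.continuousAt hbx₂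
    filter_upwards [self_mem_nhdsWithin, mem_nhdsWithin_of_mem_nhds hnear] with p hp hbp
    exact exitSolution_eq hb hbl hzero hp.1 hbp.le

lemma hasDerivAt_exitSolution_fst (hb : 0 < b) (hbl : b < l) (hφ : ContDiff ℝ 1 φ) (x₁ x₂ : ℝ) :
    HasDerivAt (fun t => exitSolution b l φ t x₂) (exitSolutionFst b l φ x₁ x₂) x₁ := by
  by_cases h : x₂ ≤ l
  · simp only [exitSolution, exitSolutionFst, if_pos h]
    exact hasDerivAt_const _ _
  · simp only [exitSolution, exitSolutionFst, if_neg h]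
    exact ((hasDerivAt_integral_right (contDiff_exitRate hb hbl hφ).continuous _ _).comp x₁
      (hasDerivAt_charInvariant_fst b x₁ x₂)).const_add _

lemma hasDerivAt_exitSolutionFst_fst (hb : 0 < b) (hbl : b < l) (hφ : ContDiff ℝ 1 φ)
    (x₁ x₂ : ℝ) :
    HasDerivAt (fun t => exitSolutionFst b l φ t x₂) (exitSolutionFstFst b l φ x₁ x₂) x₁ := by
  by_cases h : x₂ ≤ l
  · simp only [exitSolutionFst, exitSolutionFstFst, if_pos h]
    exact hasDerivAt_const _ _
  · simp only [exitSolutionFst, exitSolutionFstFst, if_neg h]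
    have hrate := ((contDiff_exitRate hb hbl hφ).differentiable one_ne_zero
      (charInvariant b x₁ x₂)).hasDerivAt
    exact (hrate.comp x₁ (hasDerivAt_charInvariant_fst b x₁ x₂)).mul_const _

lemma hasDerivAt_exitSolution_snd (hb : 0 < b) (hbl : b < l) (hφ : ContDiff ℝ 1 φ)
    (hzero : EqOn φ (fun _ => 0) (Iic l)) (hx₁ : x₁ ≤ 0) (x₂ : ℝ) :
    HasDerivAt (fun t => exitSolution b l φ x₁ t) (exitSolutionSnd b l φ x₁ x₂) x₂ := by
  rcases lt_or_ge x₂ l with h | h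
  · rw [exitSolutionSnd, if_pos h.le]
    refine (hasDerivAt_const x₂ (0 : ℝ)).congr_of_eventuallyEq ?_
    filter_upwards [Iio_mem_nhds h] with y hy
    exact if_pos (le_of_lt hy)
  · have hbx₂ : b < x₂ := hbl.trans_le h
    rw [exitSolutionSnd_eq hb hbl hzero hx₁ hbx₂.le]
    have hcost := hasDerivAt_integral_right
      (contDiff_div_id (hb.trans hbl) hφ hzero).continuous l x₂
    have hrate := (hasDerivAt_integral_right (contDiff_exitRate hb hbl hφ).continuous
      (exitLevel b l l) _).comp x₂ (hasDerivAt_charInvariant_snd b x₁ (hb.trans hbx₂).ne')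
    refine (hcost.add hrate).congr_of_eventuallyEq ?_
    filter_upwards [Ioi_mem_nhds hbx₂] with y hy
    exact exitSolution_eq hb hbl hzero hx₁ (le_of_lt hy)

lemma exitSolution_poisson (hl : 0 ≤ l) (hzero : EqOn φ (fun _ => 0) (Iic l)) (b x₁ x₂ : ℝ) :
    (-x₁ + x₂ - b) * exitSolutionFst b l φ x₁ x₂ - x₂ * exitSolutionSnd b l φ x₁ x₂ = -φ x₂ := by
  unfold exitSolutionFst exitSolutionSnd
  split_ifs with h
  · rw [hzero h, mul_zero, mul_zero, sub_zero, neg_zero]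
  · have : x₂ ≠ 0 := (hl.trans_lt (not_le.1 h)).ne'
    field_simp
    ring

lemma exitSolution_boundary (hb : 0 < b) (hbl : b < l) (φ : ℝ → ℝ) (x₂ : ℝ) :
    exitSolutionFst b l φ 0 x₂ = exitSolutionSnd b l φ 0 x₂ := by
  unfold exitSolutionFst exitSolutionSnd
  split_ifs with h
  · rfl
  · have hlx₂ : l < x₂ := not_le.1 h
    have hx₂ : x₂ ≠ 0 := ((hb.trans hbl).trans hlx₂).ne'
    rw [← exitLevel_eq_charInvariant hb hbl hlx₂.le, exitRate, exitHeight_exitLevel hb hbl]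
    field_simp
    ring

lemma isPoissonSolution_exitSolution (hb : 0 < b) (hbl : b < l) (hφ : ContDiff ℝ 1 φ)
    (hzero : EqOn φ (fun _ => 0) (Iic l)) :
    IsPoissonSolution b (fun _ x₂ => φ x₂) (exitSolution b l φ) (exitSolutionFst b l φ)
      (exitSolutionSnd b l φ) (exitSolutionFstFst b l φ) where
  contDiffOn := contDiffOn_exitSolution hb hbl hφ hzero
  hasDerivWithinAt_fst x₁ _ x₂ _ := (hasDerivAt_exitSolution_fst hb hbl hφ x₁ x₂).hasDerivWithinAt
  hasDerivWithinAt_snd _ hx₁ x₂ _ :=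
    (hasDerivAt_exitSolution_snd hb hbl hφ hzero hx₁ x₂).hasDerivWithinAt
  hasDerivWithinAt_fst_fst x₁ _ x₂ _ :=
    (hasDerivAt_exitSolutionFst_fst hb hbl hφ x₁ x₂).hasDerivWithinAt
  poisson x₁ _ x₂ _ := exitSolution_poisson (hb.trans hbl).le hzero b x₁ x₂
  boundary x₂ _ := exitSolution_boundary hb hbl φ x₂

lemma integral_div_id_le_log (hl : 0 < l) (hlx₂ : l ≤ x₂)
    (hφ : IntervalIntegrable (fun r => φ r / r) volume l x₂) (hle : ∀ x, φ x ≤ 1) :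
    ∫ r in l..x₂, φ r / r ≤ Real.log (x₂ / l) := by
  have hpos (r : ℝ) (hr : l ≤ r) : 0 < r := hl.trans_le hr
  rw [← integral_inv_of_pos hl (hpos x₂ hlx₂)]
  refine intervalIntegral.integral_mono_on hlx₂ hφ ?_ fun r hr => ?_
  · exact intervalIntegral.intervalIntegrable_inv
      (fun r hr => (hpos r (uIcc_of_le hlx₂ ▸ hr).1).ne') continuousOn_id
  · rw [← one_div]
    exact div_le_div_of_nonneg_right (hle r) (hpos r hr.1).le

lemma integral_exitRate_exitLevel (hb : 0 < b) (hbl : b < l) (hφ : ContDiff ℝ 1 φ) (x₂ : ℝ) :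
    ∫ q in exitLevel b l l..exitLevel b l x₂, exitRate b l φ q =
      ∫ y in l..x₂, φ y * y / b * exitLevelDeriv b l y := by
  rw [← intervalIntegral.integral_comp_mul_deriv (fun y _ => hasDerivAt_exitLevel hb hbl y)
    (continuous_exitLevelDeriv hb hbl).continuousOn (contDiff_exitRate hb hbl hφ).continuous]
  simp only [Function.comp_apply, exitRate, exitHeight_exitLevel hb hbl]

lemma integral_exitRate_exitLevel_le (hb : 0 < b) (hbl : b < l) (hφ : ContDiff ℝ 1 φ)
    (hle : ∀ x, φ x ≤ 1) (hlx₂ : l ≤ x₂) :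
    ∫ q in exitLevel b l l..exitLevel b l x₂, exitRate b l φ q ≤ (x₂ - l) / b := by
  have hcont : Continuous fun y => φ y * y / b * exitLevelDeriv b l y :=
    ((hφ.continuous.mul continuous_id).div_const b).mul (continuous_exitLevelDeriv hb hbl)
  calc ∫ q in exitLevel b l l..exitLevel b l x₂, exitRate b l φ q
      = ∫ y in l..x₂, φ y * y / b * exitLevelDeriv b l y :=
        integral_exitRate_exitLevel hb hbl hφ x₂
    _ ≤ ∫ _ in l..x₂, 1 / b := by
        refine intervalIntegral.integral_mono_on hlx₂ (hcont.intervalIntegrable _ _)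
          intervalIntegrable_const fun y hy => ?_
        have hy0 : 0 < y := (hb.trans hbl).trans_le hy.1
        have hby : 0 ≤ y - b := by linarith [hy.1]
        rw [exitLevelDeriv, max_eq_left hy.1]
        calc φ y * y / b * ((y - b) / y ^ 2) = φ y * ((y - b) / y) * (1 / b) := by field_simp
          _ ≤ 1 * (y / y) * (1 / b) := by
              gcongr
              · exact hle y
              · linarith
          _ = 1 / b := by rw [div_self hy0.ne', one_mul, one_mul]
    _ = (x₂ - l) / b := by rw [intervalIntegral.integral_const, smul_eq_mul, mul_one_div]

lemma exitSolution_le (hb : 0 < b) (hbl : b < l) (hφ : ContDiff ℝ 1 φ)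
    (hzero : EqOn φ (fun _ => 0) (Iic l)) (hmem : ∀ x, φ x ∈ Icc 0 1) (hlu : l ≤ u)
    (hx₁ : x₁ ≤ 0) (hx₂ : x₂ ≤ u) :
    exitSolution b l φ x₁ x₂ ≤ Real.log (u / l) + (u - l) / b := by
  have hl : 0 < l := hb.trans hbl
  unfold exitSolution
  split_ifs with h
  · exact add_nonneg (Real.log_nonneg ((one_le_div hl).2 hlu))
      (div_nonneg (sub_nonneg.2 hlu) hb.le)
  have hlx₂ : l < x₂ := not_le.1 h
  have hlevel : charInvariant b x₁ x₂ ≤ exitLevel b l x₂ :=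
    (charInvariant_le_of_nonpos hb hx₁ (hbl.trans hlx₂).le le_rfl).trans_eq
      (exitLevel_eq_charInvariant hb hbl hlx₂.le).symm
  have hmono : Monotone fun q => ∫ r in exitLevel b l l..q, exitRate b l φ r :=
    monotone_of_hasDerivAt_nonneg
      (hasDerivAt_integral_right (contDiff_exitRate hb hbl hφ).continuous _)
      (exitRate_nonneg hb hbl hzero fun x => (hmem x).1)
  have hcost : ∫ r in l..x₂, φ r / r ≤ Real.log (x₂ / l) :=
    integral_div_id_le_log hl hlx₂.le
      ((contDiff_div_id hl hφ hzero).continuous.intervalIntegrable _ _) fun x => (hmem x).2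
  have hrate : ∫ q in exitLevel b l l..charInvariant b x₁ x₂, exitRate b l φ q ≤ (x₂ - l) / b :=
    (hmono hlevel).trans
      (integral_exitRate_exitLevel_le hb hbl hφ (fun x => (hmem x).2) hlx₂.le)
  have hx₂pos : 0 < x₂ := hl.trans hlx₂
  refine (add_le_add hcost hrate).trans ?_
  gcongr

lemma abs_exitSolutionFst_le (hb : 0 < b) (hbl : b < l) (hzero : EqOn φ (fun _ => 0) (Iic l))
    (hφ : ∀ x, |φ x| ≤ 1) (hx₁ : x₁ ≤ 0) (x₂ : ℝ) : |exitSolutionFst b l φ x₁ x₂| ≤ 1 / b := by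
  have hnonneg : 0 ≤ 1 / b := one_div_nonneg.2 hb.le
  unfold exitSolutionFst
  split_ifs with h
  · rwa [abs_zero]
  have hlx₂ : l < x₂ := not_le.1 h
  have hx₂ : 0 < x₂ := (hb.trans hbl).trans hlx₂
  rcases le_total (exitHeight b l (charInvariant b x₁ x₂)) l with hq | hq
  · rwa [exitRate_eq_zero_of_exitHeight_le hzero hq, zero_mul, abs_zero]
  · have hle := exitHeight_charInvariant_le hb hbl hx₁ (hbl.trans hlx₂).le hlx₂.le le_rfl
    rw [abs_mul, abs_of_pos (one_div_pos.2 hx₂)]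
    calc _ ≤ x₂ / b * (1 / x₂) := by
          gcongr
          exact (abs_exitRate_le hb hbl hφ hq).trans (by gcongr)
      _ = 1 / b := by field_simp

lemma abs_exitSolutionFstFst_le (hb : 0 < b) (hbl : b < l) (hφ : ContDiff ℝ 1 φ)
    (hzero : EqOn φ (fun _ => 0) (Iic l)) (hle : ∀ x, |φ x| ≤ 1) {K : ℝ}
    (hK : ∀ x, |deriv φ x| ≤ K) (hx₁ : x₁ ≤ 0) (x₂ : ℝ) :
    |exitSolutionFstFst b l φ x₁ x₂| ≤ 1 / (b * (l - b)) * (1 + K * l) := by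
  have hl : 0 < l := hb.trans hbl
  have hlb : 0 < l - b := sub_pos.2 hbl
  have hKnonneg : 0 ≤ K := (abs_nonneg _).trans (hK 0)
  have hnonneg : 0 ≤ 1 / (b * (l - b)) * (1 + K * l) := by positivity
  have hdiff : Differentiable ℝ φ := hφ.differentiable one_ne_zero
  unfold exitSolutionFstFst
  split_ifs with h
  · rwa [abs_zero]
  have hlx₂ : l < x₂ := not_le.1 h
  have hx₂ : 0 < x₂ := hl.trans hlx₂
  rcases le_total (exitHeight b l (charInvariant b x₁ x₂)) l with hq | hq
  · rwa [deriv_exitRate hb hbl hdiff, hzero hq, deriv_eq_zero_of_eqOn_Iic (hdiff _) hzero hq,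
      zero_mul, add_zero, zero_div, zero_mul, zero_mul, zero_mul, abs_zero]
  · have hheight := exitHeight_charInvariant_le hb hbl hx₁ (hbl.trans hlx₂).le hlx₂.le le_rfl
    have hheight_nonneg := hl.le.trans hq
    rw [mul_assoc, abs_mul, abs_of_pos (by positivity : 0 < 1 / x₂ * (1 / x₂))]
    calc _ ≤ 1 / (b * (l - b)) * (1 + K * l) * x₂ ^ 2 * (1 / x₂ * (1 / x₂)) := by
          gcongr
          exact (abs_deriv_exitRate_le hb hbl hdiff hle hK hq).trans (by gcongr)
      _ = _ := by field_simp

theorem exists_isPoissonSolution_phiSm_snd (hb : 0 < b) (hbl : b < l) (hlu : l < u) :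
    ∃ f f₁ f₂ f₁₁, IsPoissonSolution b (fun _ x₂ => phiSm l u x₂) f f₁ f₂ f₁₁ ∧
      (∀ x₁ ≤ 0, ∀ x₂ ≤ u, f x₁ x₂ ≤ Real.log (u / l) + (u - l) / b) ∧
      ∀ x₁ ≤ 0, ∀ x₂, |f₁ x₁ x₂| ≤ 1 / b ∧
        |f₁₁ x₁ x₂| ≤ 1 / (b * (l - b)) * (1 + 4 / (u - l) * l) := by
  have hφ : ContDiff ℝ 1 (phiSm l u) := contDiff_phiSm hlu
  have hzero : EqOn (phiSm l u) (fun _ => 0) (Iic l) := fun _ hx => phiSm_of_le hx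
  have hmem : ∀ x, phiSm l u x ∈ Icc 0 1 := phiSm_mem_Icc hlu
  have habs (x : ℝ) : |phiSm l u x| ≤ 1 := (abs_of_nonneg (hmem x).1).trans_le (hmem x).2
  exact ⟨_, _, _, _, isPoissonSolution_exitSolution hb hbl hφ hzero,
    fun _ hx₁ _ hx₂ => exitSolution_le hb hbl hφ hzero hmem hlu.le hx₁ hx₂,
    fun _ hx₁ x₂ => ⟨abs_exitSolutionFst_le hb hbl hzero habs hx₁ x₂,
      abs_exitSolutionFstFst_le hb hbl hφ hzero habs (abs_deriv_phiSm_le hlu) hx₁ x₂⟩⟩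

end SecondSolution

theorem stmt16_general {n β κ1 κ2 : ℝ} (hn : 0 < n) (hβ : 0 < β) (hκ1 : β < κ1) (hκ12 : κ1 < κ2) :
    ∃ f f₁ f₂ f₁₁ g g₁ g₂ g₁₁ : ℝ → ℝ → ℝ,
      IsPoissonSolution (β / √n) (fun x₁ _ => phiSm (κ1 / √n) (κ2 / √n) (-x₁)) f f₁ f₂ f₁₁ ∧
      IsPoissonSolution (β / √n) (fun _ x₂ => phiSm (κ1 / √n) (κ2 / √n) x₂) g g₁ g₂ g₁₁ ∧
      (∀ x₁ x₂, -(κ2 / √n) ≤ x₁ → 0 ≤ x₂ → f x₁ x₂ ≤ Real.log ((κ2 - β) / (κ1 - β))) ∧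
      (∀ x₁ ≤ 0, ∀ x₂ ≤ κ2 / √n, g x₁ x₂ ≤ Real.log (κ2 / κ1) + (κ2 - κ1) / β) ∧
      (∀ x₁ x₂, 0 ≤ x₂ →
        |f₁ x₁ x₂| ≤ 4 * √n / (κ2 - κ1) * Real.log ((κ2 - β) / (κ1 - β)) ∧
        |f₁₁ x₁ x₂| ≤ 12 * n / (κ2 - κ1) ^ 2 * Real.log ((κ2 - β) / (κ1 - β))) ∧
      ∀ x₁ ≤ 0, ∀ x₂, |g₁ x₁ x₂| ≤ √n / β ∧
        |g₁₁ x₁ x₂| ≤ n / (β * (κ1 - β)) *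
          (1 + κ1 / (κ1 - β) * (4 * (κ1 - β) / (κ2 - κ1))) := by
  obtain ⟨s, hs, rfl⟩ : ∃ s : ℝ, 0 < s ∧ s ^ 2 = n := ⟨√n, Real.sqrt_pos.2 hn, Real.sq_sqrt hn.le⟩
  rw [Real.sqrt_sq hs.le]
  have hb : 0 < β / s := div_pos hβ hs
  have hbl : β / s < κ1 / s := by gcongr
  have hlu : κ1 / s < κ2 / s := by gcongr
  have hκβ : 0 < κ1 - β := sub_pos.2 hκ1
  have hκκ : 0 < κ2 - κ1 := sub_pos.2 hκ12
  obtain ⟨f, f₁, f₂, f₁₁, hf, hf_le, hf_deriv⟩ :=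
    exists_isPoissonSolution_phiSm_neg_fst hb.le hbl hlu
  obtain ⟨g, g₁, g₂, g₁₁, hg, hg_le, hg_deriv⟩ := exists_isPoissonSolution_phiSm_snd hb hbl hlu
  simp only [← sub_div, div_div_div_cancel_right₀ hs.ne'] at hf_le hf_deriv hg_le hg_deriv
  refine ⟨f, f₁, f₂, f₁₁, g, g₁, g₂, g₁₁, hf, hg, hf_le, hg_le, fun x₁ x₂ hx₂ => ?_,
    fun x₁ hx₁ x₂ => ?_⟩
  · convert hf_deriv x₁ x₂ hx₂ using 3 <;> field_simp
  · convert hg_deriv x₁ hx₁ x₂ using 2 <;> field_simp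

/-- Lemma `expergodderivs`.  Fix `n ≥ 1`, `β > 0` and `β < κ₁ < κ₂`.
There exist functions `f⁽¹⁾, f⁽²⁾ ∈ C²(Ω)` — below `F, G`, with first-order (one-sided)
partial derivatives `F1, F2, G1, G2` and second-order derivatives in `x₁` `F11, G11` —
such that (i) `F` solves the PDE with right-hand side `-φ^{(κ₁/√n,κ₂/√n)}(-x₁)` together
with the oblique boundary condition, (ii) `G` solves the PDE with right-hand side
`-φ^{(κ₁/√n,κ₂/√n)}(x₂)` together with the boundary condition, (iii) the bounds on `F`
and `G` hold on `[-κ₂/√n, 0] × [0, κ₂/√n]`, and (iv) the stated derivative bounds hold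
on all of `Ω`. -/
theorem stmt16 (n : ℕ) (hn : 1 ≤ n) (β κ1 κ2 : ℝ) (hβ : 0 < β)
    (hκ1 : β < κ1) (hκ12 : κ1 < κ2) :
    ∃ F F1 F2 F11 G G1 G2 G11 : ℝ → ℝ → ℝ,
      -- F, G ∈ C²(Ω)
      ContDiffOn ℝ 2 (fun p : ℝ × ℝ => F p.1 p.2)
        (Set.Iic (0 : ℝ) ×ˢ Set.Ici (0 : ℝ)) ∧
      ContDiffOn ℝ 2 (fun p : ℝ × ℝ => G p.1 p.2)
        (Set.Iic (0 : ℝ) ×ˢ Set.Ici (0 : ℝ)) ∧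
      -- F1, F2, G1, G2 are the first-order (one-sided) partial derivatives,
      -- and F11, G11 the second-order (one-sided) derivatives in x₁
      (∀ x1 ≤ (0 : ℝ), ∀ x2 : ℝ, 0 ≤ x2 →
        HasDerivWithinAt (fun t => F t x2) (F1 x1 x2) (Set.Iic 0) x1 ∧
        HasDerivWithinAt (fun t => F x1 t) (F2 x1 x2) (Set.Ici 0) x2 ∧
        HasDerivWithinAt (fun t => F1 t x2) (F11 x1 x2) (Set.Iic 0) x1 ∧
        HasDerivWithinAt (fun t => G t x2) (G1 x1 x2) (Set.Iic 0) x1 ∧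
        HasDerivWithinAt (fun t => G x1 t) (G2 x1 x2) (Set.Ici 0) x2 ∧
        HasDerivWithinAt (fun t => G1 t x2) (G11 x1 x2) (Set.Iic 0) x1) ∧
      -- (i) the PDE for f⁽¹⁾ and its boundary condition
      (∀ x1 ≤ (0 : ℝ), ∀ x2 : ℝ, 0 ≤ x2 →
        (-x1 + x2 - β / Real.sqrt n) * F1 x1 x2 - x2 * F2 x1 x2 =
          -phiSm (κ1 / Real.sqrt n) (κ2 / Real.sqrt n) (-x1)) ∧
      (∀ x2 : ℝ, 0 ≤ x2 → F1 0 x2 = F2 0 x2) ∧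
      -- (ii) the PDE for f⁽²⁾ and its boundary condition
      (∀ x1 ≤ (0 : ℝ), ∀ x2 : ℝ, 0 ≤ x2 →
        (-x1 + x2 - β / Real.sqrt n) * G1 x1 x2 - x2 * G2 x1 x2 =
          -phiSm (κ1 / Real.sqrt n) (κ2 / Real.sqrt n) x2) ∧
      (∀ x2 : ℝ, 0 ≤ x2 → G1 0 x2 = G2 0 x2) ∧
      -- (iii) bounds on F and G on [-κ₂/√n, 0] × [0, κ₂/√n]
      (∀ x1 : ℝ, -(κ2 / Real.sqrt n) ≤ x1 → x1 ≤ 0 →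
        ∀ x2 : ℝ, 0 ≤ x2 → x2 ≤ κ2 / Real.sqrt n →
          F x1 x2 ≤ Real.log ((κ2 - β) / (κ1 - β)) ∧
          G x1 x2 ≤ Real.log (κ2 / κ1) + (κ2 - κ1) / β) ∧
      -- (iv) derivative bounds on Ω
      (∀ x1 ≤ (0 : ℝ), ∀ x2 : ℝ, 0 ≤ x2 →
        |F1 x1 x2| ≤ 4 * Real.sqrt n / (κ2 - κ1) *
          Real.log ((κ2 - β) / (κ1 - β)) ∧
        |F11 x1 x2| ≤ 12 * n / (κ2 - κ1) ^ 2 *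
          Real.log ((κ2 - β) / (κ1 - β)) ∧
        |G1 x1 x2| ≤ Real.sqrt n / β ∧
        |G11 x1 x2| ≤ n / (β * (κ1 - β)) *
          (1 + κ1 / (κ1 - β) * (4 * (κ1 - β) / (κ2 - κ1)))) := by
  obtain ⟨F, F1, F2, F11, G, G1, G2, G11, hF, hG, hF_le, hG_le, hF_deriv, hG_deriv⟩ :=
    stmt16_general (n := n) (Nat.cast_pos.2 hn) hβ hκ1 hκ12
  exact ⟨F, F1, F2, F11, G, G1, G2, G11, hF.contDiffOn, hG.contDiffOn,
    fun x1 hx1 x2 hx2 => ⟨hF.hasDerivWithinAt_fst x1 hx1 x2 hx2,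
      hF.hasDerivWithinAt_snd x1 hx1 x2 hx2, hF.hasDerivWithinAt_fst_fst x1 hx1 x2 hx2,
      hG.hasDerivWithinAt_fst x1 hx1 x2 hx2, hG.hasDerivWithinAt_snd x1 hx1 x2 hx2,
      hG.hasDerivWithinAt_fst_fst x1 hx1 x2 hx2⟩,
    hF.poisson, hF.boundary, hG.poisson, hG.boundary,
    fun x1 hx1 hx1' x2 hx2 hx2' => ⟨hF_le x1 x2 hx1 hx2, hG_le x1 hx1' x2 hx2'⟩,
    fun x1 hx1 x2 hx2 => ⟨(hF_deriv x1 x2 hx2).1, (hF_deriv x1 x2 hx2).2,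
      (hG_deriv x1 hx1 x2).1, (hG_deriv x1 hx1 x2).2⟩⟩
end
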